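/- Let m, p, N be positive integers and let ζ be a complex number with ζ^N = 1. Set ξ = ζ^{−1}. Then Σ_{N−1 ≥ n_{2mp} ≥ ⋯ ≥ n_1 ≥ 0} (ζ;ζ)_{n_{2mp}} (−1)^{n_{2mp}} ζ^{−n_{2mp}(n_{2mp}+1)/2} · ∏_{1 ≤ i < j ≤ 2mp, m ∤ i} ζ^{Δ_{i,j,m} n_i n_j} · ∏_{i=1}^{2p−1} (−1)^{n_{mi}} ζ^{n_{mi}(n_{mi}+1)/2} · ∏_{i=1}^{2mp−1} ζ^{β_{i,m} n_i} [n_{i+1}; n_i]_ζ = Σ_{N−1 ≥ n ≥ 0, n = n_m ≥ n_{m−1} ≥ ⋯ ≥ n_1 ≥ 0, n = s_p ≥ s_{p−1} ≥ ⋯ ≥ s_1 ≥ 0} ((ξ;ξ)_n)² (−1)^n ξ^{−n(n+1)/2} ∏_{i=1}^{m−1} ξ^{n_i²+n_i} [n_{i+1}; n_i]_ξ ∏_{j=1}^{p−1} ξ^{−s_j − s_{j+1}s_j} [s_{j+1}; s_j]_ξ. (The left-hand side is 𝓕_{m,p}(ζ) and the right-hand side is 𝓤_{m,p}(−1; ζ^{−1});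 truncating both sums at N−1 loses nothing since (ζ;ζ)_n = 0 for n ≥ N.) -/

import Mathlib

open Finset

noncomputable section

/-- The q-Pochhammer symbol `(a; q)_n = ∏_{k=0}^{n-1} (1 - a q^k)`. -/
def qPoch (a q : ℂ) (n : ℕ) : ℂ := ∏ k ∈ Finset.range n, (1 - a * q ^ k)

/-- The Gaussian binomial coefficient `[n; k]_q` as a polynomial in `q` over `ℤ`,
defined by the q-Pascal rule `[n; k] = [n-1; k-1] + q^k [n-1; k]`.  It is the
polynomial equal to `(q;q)_n / ((q;q)_{n-k} (q;q)_k)`. -/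
def gaussPoly : ℕ → ℕ → Polynomial ℤ
  | _, 0 => 1
  | 0, _ + 1 => 0
  | n + 1, k + 1 => gaussPoly n k + Polynomial.X ^ (k + 1) * gaussPoly n (k + 1)

/-- The Gaussian binomial coefficient `[n; k]_q` evaluated at `q : ℂ`. -/
def gbin (q : ℂ) (n k : ℕ) : ℂ := Polynomial.aeval q (gaussPoly n k)

/-- `σ_j = (-1)^⌊(2j-1)t/l⌋`. -/
def sigmaT (l t j : ℕ) : ℤ := (-1) ^ ((2 * j - 1) * t / l)

/-- `r(j)`: the unique integer with `r(j) ≡ (2j-1)t (mod 2l)` and `-l < r(j) < l`. -/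
def rT (l t j : ℕ) : ℤ :=
  if (((2 * j - 1) * t % (2 * l) : ℕ) : ℤ) < (l : ℤ) then (((2 * j - 1) * t % (2 * l) : ℕ) : ℤ)
  else (((2 * j - 1) * t % (2 * l) : ℕ) : ℤ) - 2 * (l : ℤ)

/-- `r'(j) = (|r(j)| + 1)/2`. -/
def rpT (l t j : ℕ) : ℕ := ((rT l t j).natAbs + 1) / 2

open Classical in
/-- `i_k`: the unique `j ∈ {1, …, (l-1)/2}` with `r'(j) = k`. -/
def iT (l t k : ℕ) : ℕ :=
  if h : ∃ j, j ∈ Finset.Icc 1 ((l - 1) / 2) ∧ rpT l t j = k then h.choose else 0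

/-- `ε_{i,j,m}`: `1` if `j ≡ -i, -i-1 (mod 2m)`, `-1` if `j ≡ i, i-1 (mod 2m)`,
`0` otherwise (and `0` when `m ∣ i`, a case excluded in all uses). -/
def epsLO (m i j : ℕ) : ℤ :=
  if m ∣ i then 0
  else if 2 * m ∣ (i + j) ∨ 2 * m ∣ (i + j + 1) then 1
  else if (2 * (m : ℤ)) ∣ ((j : ℤ) - (i : ℤ)) ∨ (2 * (m : ℤ)) ∣ ((j : ℤ) - (i : ℤ) + 1) then -1
  else 0

/-- `Δ_{i,j,m}`: `1` if `j ≡ -i, -i+1 (mod 2m)`, `-1` if `j ≡ i, i+1 (mod 2m)`,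
`0` otherwise (and `0` when `m ∣ i`, a case excluded in all uses). -/
def deltaLO (m i j : ℕ) : ℤ :=
  if m ∣ i then 0
  else if 2 * m ∣ (i + j) ∨ 2 * m ∣ (i + j - 1) then 1
  else if (2 * (m : ℤ)) ∣ ((j : ℤ) - (i : ℤ)) ∨ (2 * (m : ℤ)) ∣ ((j : ℤ) - (i : ℤ) - 1) then -1
  else 0

/-- `γ_{i,m} = 1` if `i ≡ 1, …, m-1 (mod 2m)` and `-1` otherwise. -/
def gamLO (m i : ℕ) : ℤ :=
  if 1 ≤ i % (2 * m) ∧ i % (2 * m) ≤ m - 1 then 1 else -1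

/-- `β_{i,m} = 1` if `i ≡ 1, …, m-1 (mod 2m)`, `-1` if `i ≡ m+1, …, 2m-1 (mod 2m)`,
and `0` if `m ∣ i`. -/
def betLO (m i : ℕ) : ℤ :=
  if 1 ≤ i % (2 * m) ∧ i % (2 * m) ≤ m - 1 then 1
  else if m + 1 ≤ i % (2 * m) ∧ i % (2 * m) ≤ 2 * m - 1 then -1
  else 0

/-- Extend a tuple `f : Fin P → Fin N` to `n : ℕ → ℕ` with `n i = f (i-1)` for
`1 ≤ i ≤ P` and `n i = 0` otherwise (in particular `n 0 = 0`). -/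
def extTup (P N : ℕ) (f : Fin P → Fin N) : ℕ → ℕ :=
  fun i => if h : 1 ≤ i ∧ i ≤ P then (f ⟨i - 1, by omega⟩ : ℕ) else 0

/-- Takata's exponent `a(n)` (an integer; every integer division below is exact). -/
def aT (l t : ℕ) (n : ℕ → ℕ) : ℤ :=
  -(∑ j ∈ Icc 1 ((l - 1) / 2), (∑ k ∈ Icc (rpT l t j) ((l - 1) / 2),
      (sigmaT l t (iT l t k) + sigmaT l t (iT l t ((l - 1) / 2 + 1 - k))) / 2) *
      ((n j : ℤ) - (n (j - 1) : ℤ)))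
  - ∑ j ∈ Icc 1 ((l - 1) / 2 - 1), ((sigmaT l t (j + 1) + sigmaT l t ((l - 1) / 2 + 1 - j)) / 2) * (n j : ℤ)
  - ((sigmaT l t ((l - 1) / 2) + 1) / 2) * (n ((l - 1) / 2) : ℤ)
  - ∑ j ∈ Icc 1 ((l - 1) / 2), sigmaT l t j

/-- Takata's exponent `b₁(n)` (an integer; every integer division below is exact
whenever the factor it multiplies is nonzero). -/
def b1T (l t : ℕ) (n : ℕ → ℕ) : ℤ :=
  -aT l t n
  + ∑ k ∈ Icc 1 ((l - t) / 2), ((1 - sigmaT l t (iT l t k)) / 2) * (n (iT l t k - 1) : ℤ)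
  - ∑ k ∈ Icc ((l - t) / 2 + 1) ((l - 1) / 2), (n (iT l t k - 1) : ℤ)
  + ∑ k ∈ Icc ((l - t) / 2 + 1) ((l - 1) / 2), ((1 + sigmaT l t (iT l t k)) / 2) * (n (iT l t k) : ℤ)
  - (1 + sigmaT l t ((l - 1) / 2)) * (n ((l - 1) / 2) : ℤ)
  + ∑ j ∈ Icc 1 ((l - 1) / 2 - 1), ((sigmaT l t (j + 1) - sigmaT l t j) / 2) * (n j : ℤ)
  - ∑ k ∈ Icc 1 ((l - 1) / 2 - 1), ∑ k' ∈ Icc (k + 1) ((l - 1) / 2),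
      ((1 + Int.sign ((iT l t k : ℤ) - (iT l t k' : ℤ))) / 2) *
        ((sigmaT l t (iT l t k) - sigmaT l t (iT l t k')) / 2) *
        ((n (iT l t k) : ℤ) - (n (iT l t k - 1) : ℤ)) *
        ((n (iT l t k') : ℤ) - (n (iT l t k' - 1) : ℤ))
  + ∑ j ∈ Icc 1 ((l - 1) / 2), sigmaT l t j *
      (∑ k ∈ Icc 1 (rpT l t j), ((n (iT l t k) : ℤ) - (n (iT l t k - 1) : ℤ))) * (n (j - 1) : ℤ)

/-- Takata's exponent `b₂(n)`. -/
def b2T (l t : ℕ) (n : ℕ → ℕ) : ℤ :=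
  if l < 2 * t then
    ∑ k ∈ Icc ((l - t) / 2 + 1) ((t - 1) / 2),
      ((1 + sigmaT l t (iT l t k)) / 2) * (n (iT l t k - 1) : ℤ)
  else
    -∑ k ∈ Icc ((t + 1) / 2 + 1) ((l - t) / 2),
      ((1 + sigmaT l t (iT l t k)) / 2) * (n (iT l t k - 1) : ℤ)

/-- Takata's `κ(p')`. -/
def kapT (l t N : ℕ) (n : ℕ → ℕ) : ℤ :=
  if sigmaT l t ((l - 1) / 2) = -1 then -(N : ℤ) * (n ((l - 1) / 2) : ℤ) else 0

/-- Takata's `τ(j)`. -/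
def tauT (l t : ℕ) (q : ℂ) (n : ℕ → ℕ) (j : ℕ) : ℂ :=
  if sigmaT l t j = -1 then (-1 : ℂ) ^ (n j - n (j - 1))
  else q ^ ((((n j : ℤ) - (n (j - 1) : ℤ)) * (((n j : ℤ) - (n (j - 1) : ℤ)) + 1)) / 2)

/-- Takata's `X(n)`. -/
def XT (l t N : ℕ) (q : ℂ) (n : ℕ → ℕ) : ℂ :=
  (-1 : ℂ) ^ (n ((l - 1) / 2)) * q ^ kapT l t N n *
    (qPoch q q (N - 1) * qPoch q q (n ((l - 1) / 2)) / qPoch q q (N - n ((l - 1) / 2) - 1)) *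
    ∏ j ∈ Icc 1 ((l - 1) / 2), tauT l t q n j / qPoch q q (n j - n (j - 1))

/-!
Cut the `2mp` indices into `p` blocks of length `2m`. Inside a block, sum over the central index
first (`q`-binomial theorem), and then over the layers `{c - k, c + k}` around the centre `c`, from
the inside outwards. Each layer is summed by the `q`-Pfaff–Saalschütz identity, and the result is a
chain sum `∑ ∏ q^{e_k d_k - d_k d_{k+1}} [d_{k+1}; d_k]` that no longer sees the interior of the
block. The couplings between a block and the lower ones only shift the linear coefficients `e_k`,
in such a way that these shifts disappear again when the block is summed; so the induction over
the blocks closes. It leaves one factor `q^{s² + s} [n; s]` for each boundary `s` between two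
blocks and a single chain sum at the top, and these are the two chain sums of `𝓤` at `q⁻¹`.
-/

/-! ### Gaussian binomial coefficients -/

theorem gbin_zero_right (q : ℂ) (n : ℕ) : gbin q n 0 = 1 := by
  cases n <;> simp [gbin, gaussPoly]

theorem gbin_zero_succ (q : ℂ) (k : ℕ) : gbin q 0 (k + 1) = 0 := by
  simp [gbin, gaussPoly]

theorem gbin_succ_succ (q : ℂ) (n k : ℕ) :
    gbin q (n + 1) (k + 1) = gbin q n k + q ^ (k + 1) * gbin q n (k + 1) := by
  simp [gbin, gaussPoly]

theorem gaussPoly_eq_zero_of_lt {n k : ℕ} (h : n < k) : gaussPoly n k = 0 := by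
  induction n generalizing k with
  | zero => cases k <;> simp_all [gaussPoly]
  | succ n ih =>
    cases k with
    | zero => omega
    | succ k => rw [gaussPoly, ih (by omega), ih (by omega), mul_zero, add_zero]

theorem gbin_eq_zero_of_lt (q : ℂ) {n k : ℕ} (h : n < k) : gbin q n k = 0 := by
  rw [gbin, gaussPoly_eq_zero_of_lt h, map_zero]

theorem gbin_mul_gbin_eq_zero {q : ℂ} {n k j : ℕ} (h : n < j) : gbin q n k * gbin q k j = 0 := by
  rcases Nat.lt_or_ge n k with hk | hk
  · rw [gbin_eq_zero_of_lt q hk, zero_mul]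
  · rw [gbin_eq_zero_of_lt q (hk.trans_lt h), mul_zero]

theorem gaussPoly_self (n : ℕ) : gaussPoly n n = 1 := by
  induction n with
  | zero => rfl
  | succ n ih => rw [gaussPoly, ih, gaussPoly_eq_zero_of_lt n.lt_succ_self, mul_zero, add_zero]

theorem gbin_self (q : ℂ) (n : ℕ) : gbin q n n = 1 := by
  rw [gbin, gaussPoly_self, map_one]

/-- `(X; X)_n` as a polynomial. As it is never zero, identities between Gaussian polynomials can be
proved by clearing denominators, and then specialize to all `q`, roots of unity included. -/
def qFactorialPoly (n : ℕ) : Polynomial ℤ := ∏ k ∈ range n, (1 - Polynomial.X ^ (k + 1))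

theorem qFactorialPoly_zero : qFactorialPoly 0 = 1 := rfl

theorem qFactorialPoly_succ (n : ℕ) :
    qFactorialPoly (n + 1) = qFactorialPoly n * (1 - Polynomial.X ^ (n + 1)) :=
  prod_range_succ _ n

theorem qFactorialPoly_ne_zero (n : ℕ) : qFactorialPoly n ≠ 0 :=
  prod_ne_zero_iff.mpr fun k _ h => by
    simpa using congrArg (Polynomial.eval 0) h

theorem gaussPoly_mul_qFactorialPoly (a b : ℕ) :
    gaussPoly (a + b) a * (qFactorialPoly a * qFactorialPoly b) = qFactorialPoly (a + b) := by
  induction a generalizing b with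
  | zero => cases b <;> simp [gaussPoly, qFactorialPoly_zero]
  | succ a iha =>
    induction b with
    | zero => simp [gaussPoly_self, qFactorialPoly_zero]
    | succ b ihb =>
      have ha := iha (b + 1)
      rw [show a + 1 + b = a + (b + 1) by ring, ← ha] at ihb
      rw [show a + 1 + (b + 1) = a + (b + 1) + 1 by ring, gaussPoly,
        qFactorialPoly_succ (a + (b + 1)), ← ha]
      simp only [qFactorialPoly_succ a, qFactorialPoly_succ b] at ihb ⊢
      linear_combination (Polynomial.X ^ (a + 1) * (1 - Polynomial.X ^ (b + 1))) * ihb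

theorem gaussPoly_symm_add (a b : ℕ) : gaussPoly (a + b) a = gaussPoly (a + b) b := by
  refine mul_right_cancel₀
    (mul_ne_zero (qFactorialPoly_ne_zero a) (qFactorialPoly_ne_zero b)) ?_
  rw [gaussPoly_mul_qFactorialPoly, mul_comm (qFactorialPoly a), add_comm a b,
    gaussPoly_mul_qFactorialPoly]

theorem gaussPoly_mul_gaussPoly_add (a b c : ℕ) :
    gaussPoly (a + b + c) (a + b) * gaussPoly (a + b) a =
      gaussPoly (a + (b + c)) a * gaussPoly (b + c) b := by
  refine mul_right_cancel₀ (mul_ne_zero (qFactorialPoly_ne_zero a)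
    (mul_ne_zero (qFactorialPoly_ne_zero b) (qFactorialPoly_ne_zero c))) ?_
  have hab := gaussPoly_mul_qFactorialPoly a b
  have hbc := gaussPoly_mul_qFactorialPoly b c
  have habc := gaussPoly_mul_qFactorialPoly (a + b) c
  have habc' := gaussPoly_mul_qFactorialPoly a (b + c)
  rw [← add_assoc] at habc' ⊢
  linear_combination gaussPoly (a + b + c) (a + b) * qFactorialPoly c * hab + habc
    - gaussPoly (a + b + c) a * qFactorialPoly a * hbc - habc'

theorem gbin_symm_add (q : ℂ) (a b : ℕ) : gbin q (a + b) a = gbin q (a + b) b := by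
  rw [gbin, gaussPoly_symm_add, gbin]

theorem gbin_symm (q : ℂ) {n k : ℕ} (h : k ≤ n) : gbin q n (n - k) = gbin q n k := by
  obtain ⟨b, rfl⟩ := Nat.exists_eq_add_of_le h
  rw [Nat.add_sub_cancel_left, gbin_symm_add]

theorem gbin_mul_gbin (q : ℂ) {n k j : ℕ} (h : j ≤ k) :
    gbin q n k * gbin q k j = gbin q n j * gbin q (n - j) (k - j) := by
  obtain ⟨b, rfl⟩ := Nat.exists_eq_add_of_le h
  rcases Nat.lt_or_ge n (j + b) with hn | hn
  · rcases Nat.lt_or_ge n j with hj | hj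
    · rw [gbin_eq_zero_of_lt q hn, gbin_eq_zero_of_lt q hj, zero_mul, zero_mul]
    · rw [gbin_eq_zero_of_lt q hn, gbin_eq_zero_of_lt q (by omega : n - j < j + b - j), zero_mul,
        mul_zero]
  · obtain ⟨c, rfl⟩ := Nat.exists_eq_add_of_le hn
    rw [Nat.add_sub_cancel_left, add_assoc j b c, Nat.add_sub_cancel_left, ← add_assoc]
    simpa [gbin, add_assoc] using congrArg (Polynomial.aeval q) (gaussPoly_mul_gaussPoly_add j b c)

theorem gbin_add_succ_succ (q : ℂ) (a b : ℕ) :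
    gbin q (a + 1 + (b + 1)) (a + 1) =
      q ^ (b + 1) * gbin q (a + (b + 1)) a + gbin q (a + 1 + b) (a + 1) := by
  rw [gbin_symm_add, gbin_symm_add q (a + 1) b, gbin_symm_add q a (b + 1), ← add_assoc,
    gbin_succ_succ, add_right_comm a 1 b, add_assoc a b 1]
  ring

theorem gbin_inv {q : ℂ} (hq : q ≠ 0) (a b : ℕ) :
    q ^ (a * b) * gbin q⁻¹ (a + b) a = gbin q (a + b) a := by
  induction a generalizing b with
  | zero => simp [gbin_zero_right]
  | succ a iha =>
    induction b with
    | zero => simp [gbin_self]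
    | succ b ihb =>
      have hcancel : q ^ (a + 1) * q⁻¹ ^ (a + 1) = 1 := by
        rw [← mul_pow, mul_inv_cancel₀ hq, one_pow]
      rw [gbin_add_succ_succ q a b, ← ihb, ← iha (b + 1),
        show a + 1 + (b + 1) = a + (b + 1) + 1 by ring, gbin_succ_succ,
        show a + 1 + b = a + (b + 1) by ring]
      linear_combination (q ^ ((a + 1) * b) * gbin q⁻¹ (a + (b + 1)) (a + 1)) * hcancel

/-! ### `q`-Pochhammer symbols and the `q`-binomial theorem -/

theorem qPoch_zero (a q : ℂ) : qPoch a q 0 = 1 := rfl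

theorem qPoch_succ (a q : ℂ) (n : ℕ) : qPoch a q (n + 1) = qPoch a q n * (1 - a * q ^ n) :=
  prod_range_succ _ n

theorem qPoch_add (a q : ℂ) (m n : ℕ) :
    qPoch a q (m + n) = qPoch a q m * qPoch (a * q ^ m) q n := by
  simp only [qPoch, prod_range_add, pow_add, mul_assoc]

theorem qPoch_succ_left (a q : ℂ) (n : ℕ) :
    qPoch a q (n + 1) = (1 - a) * qPoch (a * q) q n := by
  rw [add_comm, qPoch_add, qPoch_succ, qPoch_zero, pow_zero, mul_one, one_mul, pow_one]

theorem gbin_add_mul_qPoch (q : ℂ) (a b : ℕ) :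
    gbin q (a + b) a * qPoch q q b = qPoch (q ^ (a + 1)) q b := by
  induction a generalizing b with
  | zero => simp [gbin_zero_right]
  | succ a iha =>
    induction b with
    | zero => simp [gbin_self, qPoch_zero]
    | succ b ihb =>
      have ha := iha (b + 1)
      rw [qPoch_succ_left (q ^ (a + 1)), ← pow_succ, qPoch_succ] at ha
      rw [add_right_comm, add_assoc] at ihb
      rw [add_right_comm, gbin_succ_succ, qPoch_succ, qPoch_succ]
      linear_combination ha + q ^ (a + 1) * (1 - q * q ^ b) * ihb

theorem sum_gbin_mul_pow_eq_qPoch (q z : ℂ) (M : ℕ) :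
    ∑ l ∈ range (M + 1), (-1) ^ l * q ^ (l.choose 2) * z ^ l * gbin q M l = qPoch z q M := by
  induction M generalizing z with
  | zero => simp [gbin_zero_right, qPoch_zero]
  | succ M ih =>
    have hshift : ∑ l ∈ range (M + 1), (-1) ^ l * q ^ (l.choose 2) * (z * q) ^ l * gbin q M l
        = ∑ l ∈ range (M + 1), (-1) ^ (l + 1) * q ^ ((l + 1).choose 2) * z ^ (l + 1) *
            (q ^ (l + 1) * gbin q M (l + 1)) + 1 := by
      rw [sum_range_succ', sum_range_succ _ M, gbin_eq_zero_of_lt q M.lt_succ_self]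
      simp only [mul_zero, add_zero, gbin_zero_right, pow_zero, Nat.choose_zero_succ, mul_one,
        mul_pow]
      congr 1
      exact sum_congr rfl fun l _ => by ring
    have hraise : ∑ l ∈ range (M + 1), (-1) ^ (l + 1) * q ^ ((l + 1).choose 2) * z ^ (l + 1) *
          gbin q M l
        = -z * ∑ l ∈ range (M + 1), (-1) ^ l * q ^ (l.choose 2) * (z * q) ^ l * gbin q M l := by
      rw [mul_sum]
      refine sum_congr rfl fun l _ => ?_
      rw [Nat.choose_succ_succ' l 1, Nat.choose_one_right]
      ring
    rw [qPoch_succ_left, ← ih (z * q), sum_range_succ']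
    simp only [gbin_succ_succ, mul_add, sum_add_distrib, hraise, gbin_zero_right, pow_zero,
      Nat.choose_zero_succ, mul_one]
    linear_combination -hshift

/-! ### The `q`-Vandermonde and `q`-Pfaff–Saalschütz summations -/

theorem gbin_vandermonde (q : ℂ) (a b s : ℕ) :
    gbin q (a + b) s
      = ∑ j ∈ range (s + 1), q ^ ((a - j) * (s - j)) * (gbin q a j * gbin q b (s - j)) := by
  induction a generalizing s with
  | zero =>
    rw [sum_range_succ']
    simp [gbin_zero_succ, gbin_zero_right]
  | succ a ih =>
    cases s with
    | zero => simp [gbin_zero_right]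
    | succ s =>
      have hexp : ∀ j ∈ range (s + 1),
          q ^ ((a - j) * (s - j)) * (q ^ (j + 1) * gbin q a (j + 1) * gbin q b (s - j)) =
            q ^ (s + 1) * (q ^ ((a - (j + 1)) * (s - j)) *
              (gbin q a (j + 1) * gbin q b (s - j))) := by
        intro j hj
        rcases Nat.lt_or_ge a (j + 1) with h | h
        · simp [gbin_eq_zero_of_lt q h]
        · obtain ⟨e, rfl⟩ := Nat.exists_eq_add_of_le h
          obtain ⟨f, rfl⟩ := Nat.exists_eq_add_of_le (mem_range_succ_iff.mp hj)
          rw [Nat.add_sub_cancel_left, show j + 1 + e - j = e + 1 by omega, Nat.add_sub_cancel_left]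
          ring
      rw [add_right_comm a 1 b, gbin_succ_succ, ih s, ih (s + 1), sum_range_succ' _ (s + 1),
        sum_range_succ' _ (s + 1)]
      simp only [gbin_succ_succ, gbin_zero_right, add_mul, mul_add, sum_add_distrib,
        Nat.add_sub_add_right, mul_sum, sum_congr rfl hexp, Nat.sub_zero, one_mul, add_assoc]
      ring

theorem gbin_vandermonde' (q : ℂ) (a b s : ℕ) :
    gbin q (a + b) s
      = ∑ j ∈ range (s + 1), q ^ ((b - (s - j)) * j) * (gbin q a j * gbin q b (s - j)) := by
  rw [add_comm, gbin_vandermonde, ← sum_range_reflect]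
  refine sum_congr rfl fun j hj => ?_
  have hj' := mem_range_succ_iff.mp hj
  rw [show s + 1 - 1 - j = s - j by omega, Nat.sub_sub_self hj', mul_comm (gbin q b _)]

theorem gbin_mul_gbin_add_sub (q : ℂ) (a b j : ℕ) :
    gbin q b j * gbin q (a + b - j) b
      = ∑ w ∈ range (b + 1), q ^ (w * (w - j)) * (gbin q a w * gbin q b w * gbin q w j) := by
  rcases Nat.lt_or_ge b j with hb | hb
  · rw [gbin_eq_zero_of_lt q hb, zero_mul]
    refine (sum_eq_zero fun w hw => ?_).symm
    rw [gbin_eq_zero_of_lt q ((mem_range_succ_iff.mp hw).trans_lt hb), mul_zero, mul_zero]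
  · rw [Nat.add_sub_assoc hb, gbin_vandermonde', mul_sum]
    refine sum_congr rfl fun w hw => ?_
    have hwb := mem_range_succ_iff.mp hw
    rcases Nat.lt_or_ge w j with hwj | hwj
    · rw [gbin_eq_zero_of_lt q hwj, gbin_eq_zero_of_lt q (by omega : b - j < b - w)]
      simp only [mul_zero]
    · have hsub : b - j - (b - w) = w - j := by omega
      have htri := gbin_mul_gbin q (n := b) hwj
      rw [← gbin_symm q (show w - j ≤ b - j by omega), show b - j - (w - j) = b - w by omega]
        at htri
      rw [hsub]
      linear_combination (-(q ^ (w * (w - j)) * gbin q a w)) * htri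

theorem pfaffSaalschutz_exponent {a b w j : ℕ} (ha : w ≤ a) (hb : w ≤ b) (hj : j ≤ w) :
    (b - j) * (a - j) + w * (w - j) = (b - w) * (a - w) + (w - j) * (a + b - j) := by
  obtain ⟨i, rfl⟩ := Nat.exists_eq_add_of_le hj
  obtain ⟨a, rfl⟩ := Nat.exists_eq_add_of_le ha
  obtain ⟨b, rfl⟩ := Nat.exists_eq_add_of_le hb
  rw [show j + i + b - j = i + b by omega, show j + i + a - j = i + a by omega,
    show j + i - j = i by omega, show j + i + b - (j + i) = b by omega,
    show j + i + a - (j + i) = a by omega, show j + i + a + (j + i + b) - j = i + a + (j + i + b)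
    by omega]
  ring

theorem gbin_mul_gbin_eq_sum_of_le (q : ℂ) {D a b : ℕ} (hb : b ≤ D) :
    gbin q D a * gbin q D b = ∑ j ∈ range (a + 1), q ^ ((b - j) * (a - j)) *
      (gbin q b j * gbin q (a + b - j) b * gbin q D (a + b - j)) := by
  obtain ⟨c, rfl⟩ := Nat.exists_eq_add_of_le hb
  rw [gbin_vandermonde, sum_mul]
  refine sum_congr rfl fun j hj => ?_
  have hja := mem_range_succ_iff.mp hj
  have htri := gbin_mul_gbin q (n := b + c) (show b ≤ a + b - j by omega)
  rw [Nat.add_sub_cancel_left, show a + b - j - b = a - j by omega] at htri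
  linear_combination (-(q ^ ((b - j) * (a - j)) * gbin q b j)) * htri

theorem gbin_mul_gbin_eq_sum (q : ℂ) (D a b : ℕ) :
    gbin q D a * gbin q D b = ∑ w ∈ range (b + 1),
      q ^ ((b - w) * (a - w)) * (gbin q b w * gbin q a w * gbin q (D + w) (a + b)) := by
  rcases Nat.lt_or_ge D b with hb | hb
  · rw [gbin_eq_zero_of_lt q hb, mul_zero]
    refine (sum_eq_zero fun w _ => ?_).symm
    rcases Nat.lt_or_ge a w with hw | hw
    · rw [gbin_eq_zero_of_lt q hw, mul_zero, zero_mul, mul_zero]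
    · rw [gbin_eq_zero_of_lt q (by omega : D + w < a + b), mul_zero, mul_zero]
  have hvandermonde : ∀ w ≤ a, gbin q (D + w) (a + b) = ∑ j ∈ range (a + 1),
      q ^ ((w - j) * (a + b - j)) * (gbin q w j * gbin q D (a + b - j)) := by
    intro w hw
    rw [add_comm, gbin_vandermonde]
    refine (sum_subset (range_mono (by omega)) fun j _ hj => ?_).symm
    rw [gbin_eq_zero_of_lt q (by simp only [mem_range] at hj; omega : w < j), zero_mul, mul_zero]
  simp only [gbin_mul_gbin_eq_sum_of_le q hb, gbin_mul_gbin_add_sub q a b, sum_mul, mul_sum]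
  rw [sum_comm]
  refine sum_congr rfl fun w hw => ?_
  rcases Nat.lt_or_ge a w with hwa | hwa
  · simp [gbin_eq_zero_of_lt q hwa]
  rw [hvandermonde w hwa, mul_sum, mul_sum]
  refine sum_congr rfl fun j _ => ?_
  rcases Nat.lt_or_ge w j with hwj | hwj
  · simp [gbin_eq_zero_of_lt q hwj]
  have hexp : q ^ ((b - j) * (a - j)) * q ^ (w * (w - j)) =
      q ^ ((b - w) * (a - w)) * q ^ ((w - j) * (a + b - j)) := by
    rw [← pow_add, ← pow_add, pfaffSaalschutz_exponent hwa (mem_range_succ_iff.mp hw) hwj]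
  linear_combination (gbin q b w * gbin q a w * gbin q w j * gbin q D (a + b - j)) * hexp

/-! ### Triangular weights -/

/-- The triangular number `n (n + 1) / 2`, as an integer so that it can serve as an exponent. -/
def tri (n : ℕ) : ℤ := ((n : ℤ) * ((n : ℤ) + 1)) / 2

theorem tri_eq_choose (n : ℕ) : tri n = ((n + 1).choose 2 : ℕ) := by
  rw [tri, Nat.choose_two_right, Nat.add_sub_cancel, mul_comm]
  norm_cast

theorem two_mul_tri (n : ℕ) : 2 * tri n = n ^ 2 + n := by
  rw [tri, Int.mul_ediv_cancel' (Int.even_mul_succ_self n).two_dvd]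
  ring

theorem tri_add (a b : ℕ) : tri (a + b) = tri a + tri b + a * b := by
  have ha := two_mul_tri a
  have hb := two_mul_tri b
  have hab := two_mul_tri (a + b)
  push_cast at hab
  linarith

/-- The signed weight `(-1)^n q^{n(n+1)/2}` of the `q`-binomial theorem. -/
def sgnTri (q : ℂ) (n : ℕ) : ℂ := (-1) ^ n * q ^ tri n

theorem sgnTri_zero (q : ℂ) : sgnTri q 0 = 1 := by simp [sgnTri, tri]

theorem sgnTri_add {q : ℂ} (hq : q ≠ 0) (a b : ℕ) :
    sgnTri q (a + b) = sgnTri q a * sgnTri q b * q ^ ((a : ℤ) * b) := by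
  simp only [sgnTri, tri_add, zpow_add₀ hq, pow_add]
  ring

theorem sgnTri_mul_self {q : ℂ} (hq : q ≠ 0) (n : ℕ) :
    sgnTri q n * sgnTri q n = q ^ ((n : ℤ) ^ 2 + n) := by
  rw [sgnTri, mul_mul_mul_comm, ← mul_pow, ← zpow_add₀ hq, ← two_mul, two_mul_tri]
  norm_num

theorem sum_sgnTri_mul_gbin (q : ℂ) (d M : ℕ) :
    ∑ l ∈ range (M + 1), sgnTri q l * q ^ (l * d) * gbin q M l = qPoch (q ^ (d + 1)) q M := by
  rw [← sum_gbin_mul_pow_eq_qPoch]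
  refine sum_congr rfl fun l _ => ?_
  rw [sgnTri, tri_eq_choose, zpow_natCast, Nat.choose_succ_succ' l 1, Nat.choose_one_right]
  ring

theorem qPoch_inv {q : ℂ} (hq : q ≠ 0) (n : ℕ) :
    qPoch q⁻¹ q⁻¹ n = (-1) ^ n * q ^ (-tri n) * qPoch q q n := by
  induction n with
  | zero => simp [qPoch_zero, tri]
  | succ n ih =>
    have htri : q ^ (-tri (n + 1)) = q ^ (-tri n) * (q⁻¹ * q⁻¹ ^ n) := by
      rw [show -tri (n + 1) = -tri n + -((n + 1 : ℕ) : ℤ) by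
        rw [tri_add]
        push_cast [tri]
        ring, zpow_add₀ hq, zpow_neg q (_ : ℕ), zpow_natCast, ← inv_pow, pow_succ']
    have hcancel : q⁻¹ * q⁻¹ ^ n * (q * q ^ n) = 1 := by
      rw [← pow_succ', ← pow_succ', ← mul_pow, inv_mul_cancel₀ hq, one_pow]
    rw [qPoch_succ, ih, qPoch_succ, htri, pow_succ]
    linear_combination (-((-1) ^ n * q ^ (-tri n) * qPoch q q n)) * hcancel

/-! ### The centre of a block -/

theorem sum_range_eq_sum_range_add {M : Type*} [AddCommMonoid M] {f : ℕ → M} {V R N : ℕ}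
    (hN : V + R < N) (hlt : ∀ c < V, f c = 0) (hgt : ∀ c, V + R < c → f c = 0) :
    ∑ c ∈ range N, f c = ∑ l ∈ range (R + 1), f (V + l) := by
  rw [eventually_constant_sum (N := V + R + 1) (fun c hc => hgt c (Nat.lt_of_succ_le hc)) hN,
    add_assoc, sum_range_add, sum_eq_zero fun c hc => hlt c (mem_range.mp hc), zero_add]

/-- The value of the sum over the central variable of a block, as a function of the neighbouring
variables `U` (to the right), `V` (to the left) and of an auxiliary variable `W`. -/
def centerWt (q : ℂ) (U V W : ℕ) : ℂ :=
  gbin q U V * sgnTri q V * q ^ (((W : ℤ) - V) * V) * qPoch (q ^ (W + 1)) q (U - V)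

theorem centerWt_eq_zero_of_lt (q : ℂ) {U V : ℕ} (W : ℕ) (h : U < V) : centerWt q U V W = 0 := by
  rw [centerWt, gbin_eq_zero_of_lt q h, zero_mul, zero_mul, zero_mul]

theorem sum_center {q : ℂ} (hq : q ≠ 0) {N U : ℕ} (V W : ℕ) (hU : U < N) :
    ∑ c ∈ range N, sgnTri q c * (gbin q U c * gbin q c V) * q ^ (((W : ℤ) - V) * c) =
      centerWt q U V W := by
  rcases Nat.lt_or_ge U V with h | h
  · rw [centerWt_eq_zero_of_lt q W h]
    refine sum_eq_zero fun c _ => ?_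
    rw [gbin_mul_gbin_eq_zero h, mul_zero, zero_mul]
  obtain ⟨R, rfl⟩ := Nat.exists_eq_add_of_le h
  rw [sum_range_eq_sum_range_add hU (fun c hc => by simp [gbin_eq_zero_of_lt q hc])
    (fun c hc => by simp [gbin_eq_zero_of_lt q hc]), centerWt, Nat.add_sub_cancel_left,
    ← sum_sgnTri_mul_gbin, mul_sum]
  refine sum_congr rfl fun l _ => ?_
  have hpow : q ^ ((V : ℤ) * l) * q ^ (((W : ℤ) - V) * (V + l : ℕ)) =
      q ^ (((W : ℤ) - V) * V) * q ^ (l * W) := by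
    rw [← zpow_natCast q (l * W), ← zpow_add₀ hq, ← zpow_add₀ hq]
    congr 1
    push_cast
    ring
  rw [gbin_mul_gbin q (Nat.le_add_right V l), Nat.add_sub_cancel_left, Nat.add_sub_cancel_left,
    sgnTri_add hq]
  linear_combination (sgnTri q V * sgnTri q l * (gbin q (V + R) V * gbin q R l)) * hpow

/-! ### The layers of a block -/

/-- The factor contributed by one layer of a block: `U`, `V`, `W` are the variables to the right
and to the left of the layer and the auxiliary one, and `u`, `v`, `w` those of the layer itself. -/
def layerCoeff (q : ℂ) (U V W u v w : ℕ) : ℂ :=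
  q ^ (-((u : ℤ) * U) + v * (u + U) - V * v + W * v - w * W + w * ((v : ℤ) - u - U)) *
    (gbin q U u * gbin q v V * gbin q W w)

theorem gbin_mul_gbin_mul_gbin (q : ℂ) (V l e M : ℕ) :
    gbin q (V + (e + M)) (V + l + e) * gbin q (V + l + e) (V + l) * gbin q (V + l) V =
      gbin q (V + (e + M)) V * gbin q (e + M) e * gbin q M l := by
  have hinner := gbin_mul_gbin q (n := V + l + e) (Nat.le_add_right V l)
  have houter := gbin_mul_gbin q (n := V + (e + M)) (show V ≤ V + l + e by omega)
  have hright := gbin_mul_gbin q (n := e + M) (Nat.le_add_left e l)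
  rw [show V + l + e - V = l + e by omega] at hinner houter
  rw [Nat.add_sub_cancel_left, gbin_symm_add q l e] at hinner
  rw [Nat.add_sub_cancel_left] at houter
  rw [Nat.add_sub_cancel_left, Nat.add_sub_cancel_right] at hright
  linear_combination gbin q (V + (e + M)) (V + l + e) * hinner + gbin q (l + e) e * houter +
    gbin q (V + (e + M)) V * hright

theorem sum_layerCoeff_mul_centerWt {q : ℂ} (hq : q ≠ 0) (V W w e M : ℕ) :
    ∑ l ∈ range (M + 1), layerCoeff q (V + (e + M)) V W (V + l + e) (V + l) w *
        centerWt q (V + l + e) (V + l) w =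
      gbin q (V + (e + M)) V * sgnTri q V *
        q ^ (((W : ℤ) - V) * V - (e + w) * (e + M) - (e + w) * w + (w : ℤ) ^ 2 - w * W) *
        (gbin q (e + M) e * gbin q W w * qPoch (q ^ (w + 1)) q e *
          qPoch (q ^ (e + w + W + 1)) q M) := by
  rw [← sum_sgnTri_mul_gbin q (e + w + W) M, mul_sum, mul_sum]
  refine sum_congr rfl fun l _ => ?_
  set E : ℤ := ((W : ℤ) - V) * V - (e + w) * (e + M) - (e + w) * w + (w : ℤ) ^ 2 - w * W with hE
  have hpow : q ^ (-(((V + l + e : ℕ) : ℤ) * (V + (e + M) : ℕ)) +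
        ((V + l : ℕ) : ℤ) * ((V + l + e : ℕ) + (V + (e + M) : ℕ)) - V * ((V + l : ℕ) : ℤ)
        + W * ((V + l : ℕ) : ℤ) - w * W +
        w * (((V + l : ℕ) : ℤ) - (V + l + e : ℕ) - (V + (e + M) : ℕ))) *
      q ^ ((V : ℤ) * l) * q ^ (((w : ℤ) - (V + l : ℕ)) * (V + l : ℕ)) =
      q ^ E * q ^ (l * (e + w + W)) := by
    rw [← zpow_natCast q (l * _), ← zpow_add₀ hq, ← zpow_add₀ hq, ← zpow_add₀ hq, hE]
    congr 1
    push_cast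
    ring
  rw [layerCoeff, centerWt, sgnTri_add hq, Nat.add_sub_cancel_left]
  linear_combination (gbin q W w * sgnTri q V * sgnTri q l * qPoch (q ^ (w + 1)) q e) *
    ((gbin q (V + (e + M)) (V + l + e) * gbin q (V + l + e) (V + l) * gbin q (V + l) V) * hpow +
      q ^ E * q ^ (l * (e + w + W)) * gbin_mul_gbin_mul_gbin q V l e M)

theorem gbin_add_mul_qPoch_mul_qPoch (q : ℂ) (W w e M : ℕ) :
    gbin q (e + M) e * qPoch (q ^ (w + 1)) q e * qPoch (q ^ (e + w + W + 1)) q M =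
      qPoch q q (e + M) *
        (gbin q (e + w) w * gbin q (e + M + W + w) (W + (e + w))) := by
  have hsplit : qPoch q q (e + M) = qPoch q q e * (gbin q (e + M) e * qPoch q q M) := by
    rw [gbin_add_mul_qPoch, qPoch_add, ← pow_succ']
  rw [hsplit, ← gbin_add_mul_qPoch q w e, ← gbin_add_mul_qPoch q (e + w + W) M, add_comm w e,
    show e + w + W + M = e + M + W + w by ring, show W + (e + w) = e + w + W by ring]
  ring

theorem sum_range_range_eq_sum_triangle {M : Type*} [AddCommMonoid M] {N V R : ℕ}
    (hN : V + R < N) {f : ℕ → ℕ → M} (hf : ∀ u v, ¬ (V ≤ v ∧ v ≤ u ∧ u ≤ V + R) → f u v = 0) :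
    ∑ u ∈ range N, ∑ v ∈ range N, f u v =
      ∑ e ∈ range (R + 1), ∑ l ∈ range (R - e + 1), f (V + l + e) (V + l) := by
  have hcol : ∀ l ∈ range (R + 1), ∑ u ∈ range N, f u (V + l) =
      ∑ e ∈ range (R - l + 1), f (V + l + e) (V + l) := fun l hl => by
    have hl' := mem_range.mp hl
    exact sum_range_eq_sum_range_add (by omega) (fun u _ => hf _ _ (by omega))
      fun u _ => hf _ _ (by omega)
  rw [sum_comm, sum_range_eq_sum_range_add hN
    (fun v _ => sum_eq_zero fun u _ => hf _ _ (by omega))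
    (fun v _ => sum_eq_zero fun u _ => hf _ _ (by omega)), sum_congr rfl hcol]
  exact sum_comm' fun l e => by simp only [mem_range]; omega

theorem sum_range_range_eq_sum_antidiagonal {M : Type*} [AddCommMonoid M] {W R : ℕ}
    {f : ℕ → ℕ → M} (hf : ∀ w e, W < w ∨ R < e → f w e = 0) :
    ∑ w ∈ range (W + 1), ∑ e ∈ range (R + 1), f w e =
      ∑ d ∈ range (R + W + 1), ∑ w ∈ range (d + 1), f w (d - w) := by
  have hmaps : ∀ z ∈ range (W + 1) ×ˢ range (R + 1), z.1 + z.2 ∈ range (R + W + 1) :=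
    fun z hz => by simp only [mem_product, mem_range] at hz ⊢; omega
  rw [← sum_product', ← sum_fiberwise_of_maps_to hmaps]
  refine sum_congr rfl fun d _ => ?_
  rw [← Nat.sum_antidiagonal_eq_sum_range_succ f]
  refine sum_subset (fun z hz => HasAntidiagonal.mem_antidiagonal.mpr (mem_filter.mp hz).2)
    fun z hz hz' => hf _ _ ?_
  simp only [mem_filter, mem_product, mem_range, HasAntidiagonal.mem_antidiagonal] at hz hz'
  omega

theorem layerCoeff_mul_centerWt_eq_zero (q : ℂ) {U V u v : ℕ} (W w : ℕ)
    (h : ¬ (V ≤ v ∧ v ≤ u ∧ u ≤ U)) : layerCoeff q U V W u v w * centerWt q u v w = 0 := by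
  rcases Nat.lt_or_ge u v with huv | huv
  · rw [centerWt_eq_zero_of_lt q w huv, mul_zero]
  rcases Nat.lt_or_ge v V with hv | hv
  · simp [layerCoeff, gbin_eq_zero_of_lt q hv]
  · simp [layerCoeff, gbin_eq_zero_of_lt q (show U < u by omega)]

theorem sum_layerCoeff_mul_centerWt_mul {q : ℂ} (hq : q ≠ 0) {N V R : ℕ} (hN : V + R < N)
    (W w : ℕ) (K : ℕ → ℂ) :
    ∑ u ∈ range N, ∑ v ∈ range N,
        layerCoeff q (V + R) V W u v w * centerWt q u v w * K (u + w - v) =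
      ∑ e ∈ range (R + 1), gbin q (V + R) V * sgnTri q V * q ^ (((W : ℤ) - V) * V) *
        qPoch q q R * (q ^ (-((w + e : ℕ) * (R + W : ℤ))) * K (w + e)) *
        (q ^ ((w + e - w) * (W - w)) *
          (gbin q (w + e) w * gbin q W w * gbin q (R + W + w) (W + (w + e)))) := by
  rw [sum_range_range_eq_sum_triangle hN fun u v huv => by
    rw [layerCoeff_mul_centerWt_eq_zero q W w huv, zero_mul]]
  refine sum_congr rfl fun e he => ?_
  obtain ⟨M, rfl⟩ := Nat.exists_eq_add_of_le (mem_range_succ_iff.mp he)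
  simp only [show ∀ l, V + l + e + w - (V + l) = w + e by omega, Nat.add_sub_cancel_left]
  rw [← sum_mul, sum_layerCoeff_mul_centerWt hq]
  rcases Nat.lt_or_ge W w with hw | hw
  · simp [gbin_eq_zero_of_lt q hw]
  have hpow : q ^ (((W : ℤ) - V) * V - (e + w) * (e + M) - (e + w) * w + (w : ℤ) ^ 2 - w * W) =
      q ^ (((W : ℤ) - V) * V) * q ^ (-((w + e : ℕ) * ((e + M : ℕ) + W : ℤ))) *
        q ^ (e * (W - w)) := by
    rw [← zpow_natCast q (e * _), ← zpow_add₀ hq, ← zpow_add₀ hq]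
    congr 1
    push_cast [Nat.cast_sub hw]
    ring
  rw [hpow, add_comm w e]
  linear_combination (gbin q (V + (e + M)) V * sgnTri q V * (q ^ (((W : ℤ) - V) * V) *
    q ^ (-((e + w : ℕ) * ((e + M : ℕ) + W : ℤ))) * q ^ (e * (W - w))) * gbin q W w * K (e + w)) *
      gbin_add_mul_qPoch_mul_qPoch q W w e M

theorem sum_layer {q : ℂ} (hq : q ≠ 0) {N U : ℕ} (V W : ℕ) (hU : U < N) (K : ℕ → ℂ) :
    ∑ u ∈ range N, ∑ v ∈ range N, ∑ w ∈ range (W + 1),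
        layerCoeff q U V W u v w * centerWt q u v w * K (u + w - v) =
      centerWt q U V W * ∑ d ∈ range (U + W - V + 1),
        q ^ (-((d : ℤ) * (U + W - V : ℕ))) * gbin q (U + W - V) d * K d := by
  rcases Nat.lt_or_ge U V with h | h
  · rw [centerWt_eq_zero_of_lt q W h, zero_mul]
    refine sum_eq_zero fun u _ => sum_eq_zero fun v _ => sum_eq_zero fun w _ => ?_
    rw [layerCoeff_mul_centerWt_eq_zero q W w (by omega), zero_mul]
  obtain ⟨R, rfl⟩ := Nat.exists_eq_add_of_le h
  rw [show V + R + W - V = R + W by omega, sum_congr rfl fun u _ => sum_comm, sum_comm,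
    sum_congr rfl fun w _ => sum_layerCoeff_mul_centerWt_mul hq hU W w K,
    sum_range_range_eq_sum_antidiagonal ?vanish, mul_sum]
  case vanish =>
    rintro w e (hw | he)
    · simp [gbin_eq_zero_of_lt q hw]
    · simp [gbin_eq_zero_of_lt q (show R + W + w < W + (w + e) by omega)]
  refine sum_congr rfl fun d _ => ?_
  have hpoch : qPoch q q R * gbin q (R + W) W = qPoch (q ^ (W + 1)) q R := by
    rw [mul_comm, add_comm, gbin_add_mul_qPoch]
  rw [sum_congr rfl fun w hw => by rw [Nat.add_sub_cancel' (mem_range_succ_iff.mp hw)],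
    ← mul_sum, ← gbin_mul_gbin_eq_sum, centerWt, Nat.add_sub_cancel_left, ← hpoch]
  push_cast
  ring

/-! ### Sums over finite sets of coordinates -/

section SumOver

variable {ι R : Type*} [DecidableEq ι]

/-- The sum of `F` over all ways of replacing the coordinates of `x` in `s` by elements of
`{0, …, N - 1}`. -/
def sumOver [AddCommMonoid R] (N : ℕ) (s : Finset ι) (F : (ι → ℕ) → R) (x : ι → ℕ) : R :=
  ∑ y : s → Fin N, F (Function.updateFinset x s fun i => (y i : ℕ))

theorem sumOver_congr [AddCommMonoid R] {N : ℕ} {s : Finset ι} {F G : (ι → ℕ) → R} {x : ι → ℕ}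
    (h : ∀ z : ι → ℕ, (∀ i ∉ s, z i = x i) → (∀ i ∈ s, z i < N) → F z = G z) :
    sumOver N s F x = sumOver N s G x :=
  Finset.sum_congr rfl fun y _ => h _
    (fun i hi => by rw [Function.updateFinset, dif_neg hi])
    (fun i hi => by rw [Function.updateFinset, dif_pos hi]; exact (y ⟨i, hi⟩).2)

theorem sumOver_empty [AddCommMonoid R] (N : ℕ) (F : (ι → ℕ) → R) (x : ι → ℕ) :
    sumOver N ∅ F x = F x := by
  rw [sumOver, Fintype.sum_unique, Function.updateFinset_empty]

theorem sumOver_singleton [AddCommMonoid R] (N : ℕ) (i : ι) (F : (ι → ℕ) → R) (x : ι → ℕ) :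
    sumOver N {i} F x = ∑ c ∈ range N, F (Function.update x i c) := by
  rw [sumOver, Finset.sum_range, ← (Equiv.funUnique ({i} : Finset ι) (Fin N)).sum_comp]
  refine Finset.sum_congr rfl fun y _ => ?_
  rw [Function.updateFinset_singleton]
  rfl

theorem sumOver_union [AddCommMonoid R] (N : ℕ) {s t : Finset ι} (hst : Disjoint s t)
    (F : (ι → ℕ) → R) (x : ι → ℕ) :
    sumOver N (s ∪ t) F x = sumOver N s (sumOver N t F) x := by
  rw [sumOver, ← (Equiv.piFinsetUnion (fun _ => Fin N) hst).sum_comp, Fintype.sum_prod_type]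
  refine Finset.sum_congr rfl fun y _ => Finset.sum_congr rfl fun z _ => ?_
  rw [Function.updateFinset_updateFinset hst]
  refine congrArg F (congrArg _ (funext fun ⟨i, hi⟩ => ?_))
  rcases Finset.mem_union.mp hi with h | h
  · rw [Equiv.piFinsetUnion_left _ hst h hi, Equiv.piFinsetUnion_left _ hst h hi]
  · rw [Equiv.piFinsetUnion_right _ hst h hi, Equiv.piFinsetUnion_right _ hst h hi]

theorem sumOver_insert [AddCommMonoid R] (N : ℕ) {i : ι} {s : Finset ι} (hi : i ∉ s)
    (F : (ι → ℕ) → R) (x : ι → ℕ) :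
    sumOver N (insert i s) F x = ∑ c ∈ range N, sumOver N s F (Function.update x i c) := by
  rw [Finset.insert_eq, sumOver_union N (Finset.disjoint_singleton_left.mpr hi), sumOver_singleton]

theorem sumOver_sum [AddCommMonoid R] {κ : Type*} (N : ℕ) (s : Finset ι) (t : Finset κ)
    (F : κ → (ι → ℕ) → R) (x : ι → ℕ) :
    sumOver N s (fun z => ∑ j ∈ t, F j z) x = ∑ j ∈ t, sumOver N s (F j) x :=
  Finset.sum_comm

theorem sumOver_mul_left [NonUnitalNonAssocSemiring R] (N : ℕ) (s : Finset ι) (a : R)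
    (F : (ι → ℕ) → R) (x : ι → ℕ) :
    sumOver N s (fun z => a * F z) x = a * sumOver N s F x :=
  (Finset.mul_sum _ _ _).symm

theorem sum_extTup [AddCommMonoid R] (P N : ℕ) (F : (ℕ → ℕ) → R) :
    ∑ f : Fin P → Fin N, F (extTup P N f) = sumOver N (Icc 1 P) F 0 := by
  let shift : Fin P ≃ Icc 1 P :=
    { toFun := fun i => ⟨i + 1, mem_Icc.mpr (by omega)⟩
      invFun := fun i => ⟨i - 1, by have := mem_Icc.mp i.2; omega⟩
      left_inv := fun i => by simp
      right_inv := fun i => Subtype.ext (Nat.sub_add_cancel (mem_Icc.mp i.2).1) }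
  refine Fintype.sum_equiv (shift.arrowCongr (Equiv.refl (Fin N))) _ _ fun f =>
    congrArg F (funext fun i => ?_)
  simp only [extTup, Function.updateFinset, mem_Icc]
  rfl

end SumOver

/-! ### Chain sums and the summation over a block -/

/-- The sum `∑ b (d 1) * ∏_{1 ≤ j ≤ k} g j (d (j + 1)) (d j)` over all chains
`d 1 ≤ ⋯ ≤ d k ≤ d (k + 1) = w`. -/
def chainSum {R : Type*} [Semiring R] (g : ℕ → ℕ → ℕ → R) (b : ℕ → R) : ℕ → ℕ → R
  | 0, w => b w
  | k + 1, w => ∑ d ∈ range (w + 1), g (k + 1) w d * chainSum g b k d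

theorem chainSum_succ_eq_sum_range {R : Type*} [Semiring R] {g : ℕ → ℕ → ℕ → R} (b : ℕ → R)
    {k : ℕ} (hg : ∀ w d, w < d → g (k + 1) w d = 0) {N w : ℕ} (hw : w < N) :
    chainSum g b (k + 1) w = ∑ d ∈ range N, g (k + 1) w d * chainSum g b k d := by
  refine sum_subset (range_subset_range.mpr hw) fun d _ hd => ?_
  rw [hg w d (by rw [mem_range] at hd; omega), zero_mul]

/-- The kernel `q^{e_j d - d w} [w; d]` of the chain sums that summing out a block produces. -/
def linKernel (q : ℂ) (e : ℕ → ℤ) (j w d : ℕ) : ℂ :=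
  q ^ (e j * d - (d : ℤ) * w) * gbin q w d

/-- The exponent coupling the `j`-th layer `{c - j, c + j}` around `c` to the blocks below. -/
def skew (c j : ℕ) (z : ℕ → ℕ) : ℤ :=
  (z (c - j) : ℤ) + z (c - j + 1) - z (c + j) - z (c + j + 1)

/-- The exponent of `q` contributed by the layers `1, …, k` around `c`; the `e j` are free linear
coefficients. -/
def blockExp (e : ℕ → ℤ) (c k : ℕ) (z : ℕ → ℕ) : ℤ :=
  ∑ j ∈ Icc 1 k, (e j * ((z (c + j) : ℤ) - z (c - j)) - (z (c - j + 1) : ℤ) * z (c - j)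
    + z (c - j) * ((z (c + j) : ℤ) + z (c + j + 1)) - z (c + j) * z (c + j + 1))

/-- The weight of the block of coordinates `c - k, …, c + k`, including its couplings to the two
neighbouring coordinates. -/
def blockWt (q : ℂ) (e : ℕ → ℤ) (c k : ℕ) (z : ℕ → ℕ) : ℂ :=
  sgnTri q (z c) * q ^ blockExp e c k z *
    ∏ i ∈ Ico (c - k - 1) (c + k + 1), gbin q (z (i + 1)) (z i)

theorem Icc_layers_succ {c k : ℕ} (hk : k < c) :
    Icc (c - (k + 1)) (c + (k + 1))
      = insert (c + (k + 1)) (insert (c - (k + 1)) (Icc (c - k) (c + k))) := by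
  ext i
  simp only [mem_insert, mem_Icc]
  omega

theorem blockWt_congr (q : ℂ) (e : ℕ → ℤ) {c k : ℕ} {x z : ℕ → ℕ}
    (h : ∀ i, c - k - 1 ≤ i → z i = x i) : blockWt q e c k z = blockWt q e c k x := by
  have hexp : blockExp e c k z = blockExp e c k x := sum_congr rfl fun j hj => by
    have := mem_Icc.mp hj
    rw [h _ (by omega), h _ (by omega), h _ (by omega), h _ (by omega)]
  rw [blockWt, blockWt, hexp, h c (by omega)]
  refine congrArg _ (prod_congr rfl fun i hi => ?_)
  have := mem_Ico.mp hi
  rw [h i (by omega), h (i + 1) (by omega)]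

theorem blockWt_zero (q : ℂ) (e : ℕ → ℤ) {c : ℕ} (hc : 0 < c) (z : ℕ → ℕ) :
    blockWt q e c 0 z = sgnTri q (z c) * (gbin q (z c) (z (c - 1)) * gbin q (z (c + 1)) (z c)) := by
  rw [blockWt, blockExp, Icc_eq_empty (by omega), sum_empty, zpow_zero, mul_one, Nat.sub_zero,
    add_zero, prod_Ico_succ_top (by omega), Nat.Ico_pred_singleton hc, prod_singleton,
    Nat.sub_add_cancel hc]

theorem blockWt_succ {q : ℂ} (hq : q ≠ 0) (e : ℕ → ℤ) {c k : ℕ} (hk : k + 1 < c) (z : ℕ → ℕ) :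
    blockWt q e c (k + 1) z = blockWt q e c k z *
      q ^ (e (k + 1) * ((z (c + (k + 1)) : ℤ) - z (c - (k + 1)))
        - (z (c - k) : ℤ) * z (c - (k + 1))
        + z (c - (k + 1)) * ((z (c + (k + 1)) : ℤ) + z (c + (k + 1) + 1))
        - z (c + (k + 1)) * z (c + (k + 1) + 1)) *
      (gbin q (z (c + (k + 1) + 1)) (z (c + (k + 1))) *
        gbin q (z (c - (k + 1))) (z (c - (k + 1) - 1))) := by
  have hIco : ∏ i ∈ Ico (c - (k + 1) - 1) (c + (k + 1) + 1), gbin q (z (i + 1)) (z i)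
      = gbin q (z (c - (k + 1))) (z (c - (k + 1) - 1)) *
        (∏ i ∈ Ico (c - k - 1) (c + k + 1), gbin q (z (i + 1)) (z i)) *
        gbin q (z (c + (k + 1) + 1)) (z (c + (k + 1))) := by
    rw [prod_Ico_succ_top (by omega), prod_eq_prod_Ico_succ_bot (by omega),
      show c - (k + 1) - 1 + 1 = c - (k + 1) by omega]
    rfl
  rw [blockWt, blockWt, blockExp, blockExp, sum_Icc_succ_top (by omega), zpow_add₀ hq, hIco,
    show c - (k + 1) + 1 = c - k by omega]
  ring

theorem blockWt_mul_chainSum_succ {q : ℂ} (hq : q ≠ 0) (e : ℕ → ℤ) {c k : ℕ} (hk : k + 1 < c)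
    (z : ℕ → ℕ) (w : ℕ) :
    blockWt q e c (k + 1) z *
        q ^ (((w : ℤ) - z (c - (k + 1) - 1)) * z (c - (k + 1))) *
        chainSum (linKernel q fun j => e j + skew c j z) 1 (k + 1) w
      = ∑ d ∈ range (w + 1),
        q ^ (e (k + 1) * ((z (c + (k + 1)) : ℤ) - z (c - (k + 1)) + d)) *
        layerCoeff q (z (c + (k + 1) + 1)) (z (c - (k + 1) - 1)) w
          (z (c + (k + 1))) (z (c - (k + 1))) d *
        (blockWt q e c k z * q ^ (((d : ℤ) - z (c - k - 1)) * z (c - k)) *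
          chainSum (linKernel q fun j => e j + skew c j z) 1 k d) := by
  rw [blockWt_succ hq e hk, chainSum, mul_sum]
  refine sum_congr rfl fun d _ => ?_
  have hskew : skew c (k + 1) z = (z (c - (k + 1)) : ℤ) + z (c - k) - z (c + (k + 1))
      - z (c + (k + 1) + 1) := by
    rw [skew, show c - (k + 1) + 1 = c - k by omega]
  rw [linKernel, layerCoeff, hskew, show c - k - 1 = c - (k + 1) by omega]
  generalize z (c + (k + 1) + 1) = U, z (c + (k + 1)) = u, z (c - (k + 1)) = v,
    z (c - (k + 1) - 1) = V, z (c - k) = t, e (k + 1) = f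
  have hpow : q ^ (f * ((u : ℤ) - v) - (t : ℤ) * v + v * ((u : ℤ) + U) - u * U) *
        q ^ (((w : ℤ) - V) * v) * q ^ ((f + ((v : ℤ) + t - u - U)) * d - (d : ℤ) * w)
      = q ^ (f * ((u : ℤ) - v + d)) *
        q ^ (-((u : ℤ) * U) + v * (u + U) - V * v + w * v - d * w + d * ((v : ℤ) - u - U)) *
        q ^ (((d : ℤ) - v) * t) := by
    simp only [← zpow_add₀ hq]
    congr 1
    ring
  linear_combination (blockWt q e c k z * gbin q U u * gbin q v V * gbin q w d *
    chainSum (linKernel q fun j => e j + skew c j z) 1 k d) * hpow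

theorem sumOver_blockWt_succ {q : ℂ} (hq : q ≠ 0) (e : ℕ → ℤ) (N : ℕ) {c k : ℕ} (hk : k + 1 < c)
    (x : ℕ → ℕ) (w : ℕ) :
    sumOver N (Icc (c - k) (c + k)) (fun z => blockWt q e c (k + 1) z *
        q ^ (((w : ℤ) - z (c - (k + 1) - 1)) * z (c - (k + 1))) *
        chainSum (linKernel q fun j => e j + skew c j z) 1 (k + 1) w) x
      = ∑ d ∈ range (w + 1),
        q ^ (e (k + 1) * ((x (c + (k + 1)) : ℤ) - x (c - (k + 1)) + d)) *
        layerCoeff q (x (c + (k + 1) + 1)) (x (c - (k + 1) - 1)) w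
          (x (c + (k + 1))) (x (c - (k + 1))) d *
        sumOver N (Icc (c - k) (c + k)) (fun z => blockWt q e c k z *
          q ^ (((d : ℤ) - z (c - k - 1)) * z (c - k)) *
          chainSum (linKernel q fun j => e j + skew c j z) 1 k d) x := by
  simp only [← sumOver_mul_left]
  rw [← sumOver_sum]
  refine sumOver_congr fun z hz _ => ?_
  have outside : ∀ i, i < c - k ∨ c + k < i → z i = x i :=
    fun i hi => hz i (by simp only [mem_Icc]; omega)
  rw [blockWt_mul_chainSum_succ hq e hk, outside (c + (k + 1)) (by omega),
    outside (c - (k + 1)) (by omega), outside (c + (k + 1) + 1) (by omega),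
    outside (c - (k + 1) - 1) (by omega)]

theorem chainSum_linKernel_succ {q : ℂ} (hq : q ≠ 0) (e : ℕ → ℤ) (b : ℕ → ℂ) (k w : ℕ) :
    chainSum (linKernel q e) b (k + 1) w
      = ∑ d ∈ range (w + 1), q ^ (-((d : ℤ) * w)) * gbin q w d *
        (q ^ (e (k + 1) * d) * chainSum (linKernel q e) b k d) := by
  rw [chainSum]
  refine sum_congr rfl fun d _ => ?_
  rw [linKernel, sub_eq_add_neg, zpow_add₀ hq]
  ring

theorem sum_block {q : ℂ} (hq : q ≠ 0) (e : ℕ → ℤ) {N c k : ℕ} (hk : k < c) {x : ℕ → ℕ}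
    (hx : x (c + k + 1) < N) (w : ℕ) :
    sumOver N (Icc (c - k) (c + k)) (fun z => blockWt q e c k z *
        q ^ (((w : ℤ) - z (c - k - 1)) * z (c - k)) *
        chainSum (linKernel q fun j => e j + skew c j z) 1 k w) x
      = centerWt q (x (c + k + 1)) (x (c - k - 1)) w *
        chainSum (linKernel q e) 1 k (x (c + k + 1) + w - x (c - k - 1)) := by
  induction k generalizing x w with
  | zero =>
    simp only [chainSum, Nat.sub_zero, add_zero, Icc_self, sumOver_singleton, mul_one,
      Pi.one_apply] at hx ⊢
    rw [← sum_center hq _ w hx]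
    refine sum_congr rfl fun a _ => ?_
    rw [blockWt_zero q e hk, Function.update_self, Function.update_of_ne (by omega),
      Function.update_of_ne (by omega), mul_comm (gbin q a _)]
  | succ k ih =>
    have hL : c - (k + 1) ∉ Icc (c - k) (c + k) := by simp only [mem_Icc]; omega
    have hR : c + (k + 1) ∉ insert (c - (k + 1)) (Icc (c - k) (c + k)) := by
      simp only [mem_insert, mem_Icc]; omega
    rw [Icc_layers_succ (by omega), sumOver_insert N hR, chainSum_linKernel_succ hq,
      ← sum_layer hq (x (c - (k + 1) - 1)) w hx
        (fun d => q ^ (e (k + 1) * d) * chainSum (linKernel q e) 1 k d)]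
    refine sum_congr rfl fun u hu => ?_
    rw [sumOver_insert N hL]
    refine sum_congr rfl fun v _ => ?_
    set x' := Function.update (Function.update x (c + (k + 1)) u) (c - (k + 1)) v with hx'
    have hu' : x' (c + (k + 1)) = u := by
      rw [hx', Function.update_of_ne (by omega), Function.update_self]
    have hv' : x' (c - (k + 1)) = v := Function.update_self ..
    have outside : ∀ i, i < c - (k + 1) ∨ c + (k + 1) < i → x' i = x i := fun i hi => by
      rw [hx', Function.update_of_ne (by omega), Function.update_of_ne (by omega)]
    rw [sumOver_blockWt_succ hq e N hk, outside (c + (k + 1) + 1) (by omega),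
      outside (c - (k + 1) - 1) (by omega), hu', hv']
    refine sum_congr rfl fun d _ => ?_
    rw [ih (by omega) (hu'.trans_lt (mem_range.mp hu)), add_assoc c k, Nat.sub_sub c k, hu', hv']
    rcases Nat.lt_or_ge u v with huv | huv
    · rw [centerWt_eq_zero_of_lt q d huv, zero_mul, mul_zero, mul_zero, zero_mul]
    · rw [show (u : ℤ) - v + d = (u + d - v : ℕ) by omega]
      ring

/-! ### The exponents of `𝓕` -/

/-- The sign attached to the index `i` by the `k`-th layers: `1` if `i ≡ m - k`, `-1` if
`i ≡ m + k (mod 2m)`, and `0` otherwise. -/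
def layerSign (m k i : ℕ) : ℤ :=
  if i % (2 * m) = m - k then 1 else if i % (2 * m) = m + k then -1 else 0

/-- Minus the signed sum of the coordinates with index below `j` in the `k`-th layers. -/
def layerSum (m k j : ℕ) (x : ℕ → ℕ) : ℤ := -∑ i ∈ range j, layerSign m k i * x i

theorem layerSign_mul_add (m k p : ℕ) {r : ℕ} (hr : r < 2 * m) :
    layerSign m k (2 * m * p + r)
      = if r = m - k then 1 else if r = m + k then -1 else 0 := by
  rw [layerSign, Nat.mul_add_mod, Nat.mod_eq_of_lt hr]

theorem layerSign_mul {m k : ℕ} (hk : k < m) (p : ℕ) : layerSign m k (2 * m * p) = 0 := by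
  rw [layerSign, Nat.mul_mod_right, if_neg (by omega), if_neg (by omega)]

theorem sum_layerSign_block_mul {m k : ℕ} (hk : 0 < k) (hkm : k < m) (p : ℕ) (g : ℕ → ℤ) :
    ∑ i ∈ Ico (2 * m * p) (2 * m * p + 2 * m), layerSign m k i * g i
      = g (2 * m * p + m - k) - g (2 * m * p + m + k) := by
  have hsplit : ∀ r ∈ range (2 * m), layerSign m k (2 * m * p + r) * g (2 * m * p + r)
      = (if r = m - k then g (2 * m * p + r) else 0)
        - (if r = m + k then g (2 * m * p + r) else 0) := by
    intro r hr
    rw [layerSign_mul_add m k p (mem_range.mp hr)]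
    split_ifs <;> omega
  rw [sum_Ico_eq_sum_range, Nat.add_sub_cancel_left, sum_congr rfl hsplit, sum_sub_distrib,
    sum_ite_eq', sum_ite_eq', if_pos (mem_range.mpr (by omega)),
    if_pos (mem_range.mpr (by omega)), ← Nat.add_sub_assoc hkm.le, add_assoc]

theorem sum_Icc_layerSign_mul (m i : ℕ) (g : ℕ → ℤ) :
    ∑ k ∈ Icc 1 (m - 1), layerSign m k i * g k
      = if 1 ≤ i % (2 * m) ∧ i % (2 * m) ≤ m - 1 then g (m - i % (2 * m))
        else if m + 1 ≤ i % (2 * m) ∧ i % (2 * m) ≤ 2 * m - 1 then -g (i % (2 * m) - m)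
        else 0 := by
  have hsplit : ∀ k ∈ Icc 1 (m - 1), layerSign m k i * g k
      = (if k = m - i % (2 * m) then g k else 0) - (if k = i % (2 * m) - m then g k else 0) := by
    intro k hk
    rw [mem_Icc] at hk
    rw [layerSign]
    split_ifs <;> omega
  rw [sum_congr rfl hsplit, sum_sub_distrib, sum_ite_eq', sum_ite_eq']
  simp only [mem_Icc]
  split_ifs <;> omega

theorem betLO_eq_sum (m i : ℕ) : betLO m i = ∑ k ∈ Icc 1 (m - 1), layerSign m k i := by
  have h := sum_Icc_layerSign_mul m i 1
  simp only [Pi.one_apply, mul_one] at h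
  rw [h, betLO]

theorem sum_layerSign_mul_layerSign {m : ℕ} (hm : 0 < m) (i j : ℕ) :
    ∑ k ∈ Icc 1 (m - 1), layerSign m k i * layerSign m k j
      = if m ∣ i then 0
        else (if 2 * (m : ℤ) ∣ (j : ℤ) - i then 1 else 0)
          - (if 2 * (m : ℤ) ∣ (i : ℤ) + j then 1 else 0) := by
  have hi : i % (2 * m) < 2 * m := Nat.mod_lt _ (by omega)
  have hj : j % (2 * m) < 2 * m := Nat.mod_lt _ (by omega)
  have hdvd : m ∣ i ↔ i % (2 * m) = 0 ∨ i % (2 * m) = m := by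
    rw [← Nat.dvd_mod_iff (Nat.dvd_mul_left m 2)]
    refine ⟨fun ⟨t, ht⟩ => ?_, ?_⟩
    · have : t < 2 := by nlinarith
      interval_cases t <;> omega
    · rintro (h | h) <;> simp [h]
  have hsub : 2 * (m : ℤ) ∣ (j : ℤ) - i ↔ i % (2 * m) = j % (2 * m) := by
    exact_mod_cast (Nat.modEq_iff_dvd (n := 2 * m)).symm
  have hadd : 2 * (m : ℤ) ∣ (i : ℤ) + j ↔
      i % (2 * m) + j % (2 * m) = 0 ∨ i % (2 * m) + j % (2 * m) = 2 * m := by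
    have : 2 * (m : ℤ) ∣ (i : ℤ) + j ↔ (i + j) % (2 * m) = 0 := by
      rw [← Nat.dvd_iff_mod_eq_zero]
      exact_mod_cast Iff.rfl
    rw [this, Nat.add_mod_eq_ite]
    split_ifs <;> omega
  rw [sum_Icc_layerSign_mul]
  simp only [hdvd, hsub, hadd, layerSign]
  split_ifs <;> omega

theorem deltaLO_succ_eq_ite_sum {m i : ℕ} (hi : ¬ m ∣ i) (j : ℕ) :
    deltaLO m i (j + 1)
      = (if 2 * (m : ℤ) ∣ (i : ℤ) + (j + 1 : ℕ) then 1 else 0)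
        + (if 2 * (m : ℤ) ∣ (i : ℤ) + j then 1 else 0)
        - (if 2 * (m : ℤ) ∣ ((j + 1 : ℕ) : ℤ) - i then 1 else 0)
        - (if 2 * (m : ℤ) ∣ (j : ℤ) - i then 1 else 0) := by
  have even_add : ∀ {a b : ℤ}, 2 * (m : ℤ) ∣ a → 2 * (m : ℤ) ∣ b → (a + b) % 2 = 0 :=
    fun ha hb => Int.emod_eq_zero_of_dvd ((dvd_mul_right 2 (m : ℤ)).trans (dvd_add ha hb))
  have sub_ne : ∀ {a b : ℤ}, 2 * (m : ℤ) ∣ a → 2 * (m : ℤ) ∣ b → a - b ≠ 2 * i :=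
    fun ha hb h => hi (Int.natCast_dvd_natCast.mp
      (Int.dvd_of_mul_dvd_mul_left two_ne_zero (h ▸ dvd_sub ha hb)))
  have hadd : 2 * m ∣ i + (j + 1) ↔ 2 * (m : ℤ) ∣ (i : ℤ) + (j + 1 : ℕ) := by
    exact_mod_cast Iff.rfl
  have hadd' : 2 * m ∣ i + (j + 1) - 1 ↔ 2 * (m : ℤ) ∣ (i : ℤ) + j := by
    exact_mod_cast Iff.rfl
  simp only [deltaLO, if_neg hi, hadd, hadd',
    show ((j + 1 : ℕ) : ℤ) - i - 1 = (j : ℤ) - i by push_cast; ring]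
  split_ifs <;> grind

theorem deltaLO_eq_sum {m i j : ℕ} (hm : 0 < m) (hij : i < j) :
    deltaLO m i j
      = -∑ k ∈ Icc 1 (m - 1), layerSign m k i * (layerSign m k j + layerSign m k (j - 1)) := by
  obtain ⟨j, rfl⟩ : ∃ j', j = j' + 1 := ⟨j - 1, by omega⟩
  simp only [mul_add, sum_add_distrib, sum_layerSign_mul_layerSign hm, Nat.add_sub_cancel]
  by_cases hi : m ∣ i
  · simp only [deltaLO, hi, if_true, add_zero, neg_zero]
  · rw [deltaLO_succ_eq_ite_sum hi, if_neg hi, if_neg hi]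
    ring

theorem layerSum_succ_right (m k j : ℕ) (x : ℕ → ℕ) :
    layerSum m k (j + 1) x = layerSum m k j x - layerSign m k j * x j := by
  rw [layerSum, layerSum, sum_range_succ, neg_add, sub_eq_add_neg]

theorem layerSum_mul_add {m k : ℕ} (hk : 0 < k) (hkm : k < m) (p : ℕ) (x : ℕ → ℕ) {r : ℕ}
    (hr : r ≤ 2 * m) :
    layerSum m k (2 * m * p + r) x = layerSum m k (2 * m * p) x
      - (if m - k < r then (x (2 * m * p + (m - k)) : ℤ) else 0)
      + (if m + k < r then (x (2 * m * p + (m + k)) : ℤ) else 0) := by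
  induction r with
  | zero => simp
  | succ r ih =>
    rw [← add_assoc, layerSum_succ_right, ih (by omega), layerSign_mul_add m k p (by omega)]
    rcases eq_or_ne r (m - k) with rfl | h
    · simp [show ¬ m + k < m - k by omega, show ¬ m + k < m - k + 1 by omega]
    rcases eq_or_ne r (m + k) with rfl | h'
    · simp [h, show m - k < m + k by omega, show m - k < m + k + 1 by omega]
    · simp [h, h', show m - k < r + 1 ↔ m - k < r by omega, show m + k < r + 1 ↔ m + k < r by omega]

theorem layerSum_block_succ {m k : ℕ} (hk : 0 < k) (hkm : k < m) (p : ℕ) (x : ℕ → ℕ) :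
    layerSum m k (2 * m * (p + 1)) x = layerSum m k (2 * m * p) x
      + ((x (2 * m * p + m + k) : ℤ) - x (2 * m * p + m - k)) := by
  rw [mul_add, mul_one, layerSum_mul_add hk hkm p x le_rfl, if_pos (by omega), if_pos (by omega),
    ← add_assoc, Nat.add_sub_assoc hkm.le]
  ring

/-- The exponent of `q` in the summand of `𝓕` with `P` indices, with additional linear
coefficients `e k` on the `k`-th layers. -/
def towerExp (m : ℕ) (e : ℕ → ℤ) (P : ℕ) (x : ℕ → ℕ) : ℤ :=
  ∑ k ∈ Icc 1 (m - 1), (e k * layerSum m k P x + ∑ i ∈ range P,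
    layerSign m k i * (x i * layerSum m k i x + x (i + 1) * layerSum m k (i + 1) x))

theorem towerExp_block_succ (m : ℕ) (e : ℕ → ℤ) (p : ℕ) (x : ℕ → ℕ) :
    towerExp m e (2 * m * (p + 1)) x
      = towerExp m (fun k => e k + skew (2 * m * p + m) k x) (2 * m * p) x
        + blockExp e (2 * m * p + m) (m - 1) x := by
  rw [towerExp, towerExp, blockExp, ← sum_add_distrib]
  refine sum_congr rfl fun k hk => ?_
  obtain ⟨hk, hkm⟩ : 0 < k ∧ k < m := by have := mem_Icc.mp hk; omega
  have hsum (r : ℕ) (hr : r ≤ 2 * m) := layerSum_mul_add hk hkm p x hr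
  have lower := hsum (m - k) (by omega)
  have lower' := hsum (m - k + 1) (by omega)
  have upper := hsum (m + k) (by omega)
  have upper' := hsum (m + k + 1) (by omega)
  rw [if_neg (by omega), if_neg (by omega), ← Nat.add_sub_assoc hkm.le] at lower
  rw [if_pos (by omega), if_neg (by omega), ← add_assoc, ← Nat.add_sub_assoc hkm.le] at lower'
  rw [if_pos (by omega), if_neg (by omega), ← add_assoc, ← Nat.add_sub_assoc hkm.le] at upper
  rw [if_pos (by omega), if_pos (by omega), ← add_assoc, ← add_assoc,
    ← Nat.add_sub_assoc hkm.le] at upper'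
  rw [layerSum_block_succ hk hkm, mul_add (2 * m), mul_one,
    ← sum_range_add_sum_Ico _ (show 2 * m * p ≤ 2 * m * p + 2 * m by omega),
    sum_layerSign_block_mul hk hkm, lower, lower', upper, upper', skew]
  ring

theorem sum_layerSign_succ_mul {m k : ℕ} (hk : k < m) (p : ℕ) (g : ℕ → ℤ) :
    ∑ j ∈ range (2 * m * p), layerSign m k (j + 1) * g (j + 1)
      = ∑ j ∈ range (2 * m * p), layerSign m k j * g j := by
  have h := (sum_range_succ' (fun j => layerSign m k j * g j) (2 * m * p)).symm.trans
    (sum_range_succ _ _)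
  have h₀ : layerSign m k 0 = 0 := layerSign_mul hk 0
  simpa only [layerSign_mul hk, h₀, zero_mul, add_zero] using h

theorem sum_deltaLO_mul_eq_sum_layerSum {m : ℕ} (hm : 0 < m) (j : ℕ) (x : ℕ → ℕ) :
    ∑ i ∈ range (j + 1), deltaLO m i (j + 1) * x i * x (j + 1)
      = ∑ k ∈ Icc 1 (m - 1), (layerSign m k (j + 1) + layerSign m k j) *
        (x (j + 1) * layerSum m k (j + 1) x) := by
  simp only [layerSum, ← sum_neg_distrib, mul_sum]
  rw [sum_comm]
  refine sum_congr rfl fun i hi => ?_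
  rw [deltaLO_eq_sum hm (mem_range.mp hi), Nat.add_sub_cancel, mul_assoc, neg_mul, sum_mul,
    ← sum_neg_distrib]
  exact sum_congr rfl fun k _ => by ring

theorem sum_deltaLO_mul {m : ℕ} (hm : 0 < m) (p : ℕ) (x : ℕ → ℕ) :
    ∑ i ∈ Icc 1 (2 * m * p) with ¬ m ∣ i, ∑ j ∈ Icc (i + 1) (2 * m * p),
        deltaLO m i j * x i * x j
      = ∑ k ∈ Icc 1 (m - 1), ∑ i ∈ range (2 * m * p),
        layerSign m k i * (x i * layerSum m k i x + x (i + 1) * layerSum m k (i + 1) x) := by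
  have hdvd : ∀ {i} j, m ∣ i → deltaLO m i j = 0 := fun j h => by rw [deltaLO, if_pos h]
  calc
    _ = ∑ i ∈ Icc 1 (2 * m * p), ∑ j ∈ Icc (i + 1) (2 * m * p), deltaLO m i j * x i * x j := by
      refine sum_filter_of_ne fun i _ hne h => hne (sum_eq_zero fun j _ => ?_)
      rw [hdvd j h, zero_mul, zero_mul]
    _ = ∑ j ∈ range (2 * m * p), ∑ i ∈ range (j + 1), deltaLO m i (j + 1) * x i * x (j + 1) := by
      rw [sum_comm' (t' := Ico 1 (2 * m * p + 1)) (s' := fun j => Ico 1 j)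
        (by intro i j; simp only [mem_Icc, mem_Ico]; omega), sum_Ico_eq_sum_range,
        Nat.add_sub_cancel]
      refine sum_congr rfl fun j _ => ?_
      rw [add_comm 1 j, sum_range_eq_add_Ico _ (by omega), hdvd _ (dvd_zero m), zero_mul,
        zero_mul, zero_add]
    _ = ∑ k ∈ Icc 1 (m - 1), ∑ j ∈ range (2 * m * p),
        (layerSign m k (j + 1) + layerSign m k j) * (x (j + 1) * layerSum m k (j + 1) x) := by
      simp only [sum_deltaLO_mul_eq_sum_layerSum hm]
      exact sum_comm
    _ = _ := by
      refine sum_congr rfl fun k hk => ?_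
      have hkm : k < m := by have := mem_Icc.mp hk; omega
      simp only [add_mul, mul_add, sum_add_distrib,
        sum_layerSign_succ_mul hkm p fun j => x j * layerSum m k j x]

theorem towerExp_neg_one {m : ℕ} (hm : 0 < m) (p : ℕ) (x : ℕ → ℕ) :
    towerExp m (fun _ => -1) (2 * m * p) x
      = ∑ i ∈ Icc 1 (2 * m * p) with ¬ m ∣ i, ∑ j ∈ Icc (i + 1) (2 * m * p),
          deltaLO m i j * x i * x j
        + ∑ i ∈ range (2 * m * p), betLO m i * x i := by
  simp only [sum_deltaLO_mul hm, betLO_eq_sum, sum_mul]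
  rw [sum_comm (s := range _) (t := Icc _ _), ← sum_add_distrib, towerExp]
  refine sum_congr rfl fun k _ => ?_
  rw [layerSum]
  ring

/-! ### Summation over the tower of blocks -/

theorem zpow_finsetSum {ι K : Type*} [CommGroupWithZero K] {a : K} (ha : a ≠ 0) (s : Finset ι)
    (f : ι → ℤ) : a ^ ∑ i ∈ s, f i = ∏ i ∈ s, a ^ f i := by
  classical
  induction s using Finset.induction_on with
  | empty => rw [sum_empty, prod_empty, zpow_zero]
  | insert i s hi ih => rw [sum_insert hi, prod_insert hi, zpow_add₀ ha, ih]

/-- The part of the summand of `𝓕_{m,p}` that depends on all the indices, restricted to `x 0 = 0`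
and with linear coefficients `e k` on the `k`-th layers. -/
def towerWt (q : ℂ) (m p : ℕ) (e : ℕ → ℤ) (x : ℕ → ℕ) : ℂ :=
  (if x 0 = 0 then 1 else 0) * q ^ towerExp m e (2 * m * p) x *
    (∏ i ∈ range (2 * p), sgnTri q (x (m * i))) *
    ∏ i ∈ range (2 * m * p), gbin q (x (i + 1)) (x i)

theorem towerWt_neg_one {q : ℂ} (hq : q ≠ 0) {m p : ℕ} (hm : 0 < m) (hp : 0 < p) {x : ℕ → ℕ}
    (hx : x 0 = 0) :
    towerWt q m p (fun _ => -1) x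
      = (∏ i ∈ Icc 1 (2 * m * p) with ¬ m ∣ i, ∏ j ∈ Icc (i + 1) (2 * m * p),
          q ^ (deltaLO m i j * x i * x j)) *
        (∏ i ∈ Icc 1 (2 * p - 1), sgnTri q (x (m * i))) *
        ∏ i ∈ Icc 1 (2 * m * p - 1), q ^ (betLO m i * x i) * gbin q (x (i + 1)) (x i) := by
  have prod_range_eq : ∀ {n} (g : ℕ → ℂ), 0 < n → g 0 = 1 →
      ∏ i ∈ range n, g i = ∏ i ∈ Icc 1 (n - 1), g i := by
    intro n g hn hg
    rw [prod_range_eq_mul_Ico _ hn, hg, one_mul]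
    rfl
  have hP : 0 < 2 * m * p := by positivity
  simp only [towerWt, if_pos hx, towerExp_neg_one hm, zpow_add₀ hq, zpow_finsetSum hq,
    prod_mul_distrib]
  rw [prod_range_eq _ hP (by rw [hx, Nat.cast_zero, mul_zero, zpow_zero]),
    prod_range_eq _ (by omega) (by rw [mul_zero, hx, sgnTri_zero]),
    prod_range_eq _ hP (by rw [hx, gbin_zero_right])]
  ring

theorem towerWt_succ {q : ℂ} (hq : q ≠ 0) {m : ℕ} (hm : 0 < m) (p : ℕ) (e : ℕ → ℤ)
    (x : ℕ → ℕ) :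
    towerWt q m (p + 1) e x = sgnTri q (x (2 * m * p)) * blockWt q e (2 * m * p + m) (m - 1) x *
      towerWt q m p (fun k => e k + skew (2 * m * p + m) k x) x := by
  have hsgn : ∏ i ∈ range (2 * (p + 1)), sgnTri q (x (m * i))
      = (∏ i ∈ range (2 * p), sgnTri q (x (m * i))) * sgnTri q (x (2 * m * p)) *
        sgnTri q (x (2 * m * p + m)) := by
    rw [mul_add, prod_range_succ, prod_range_succ, mul_left_comm, mul_add, mul_left_comm m 2 p,
      mul_one, ← mul_assoc 2 m p]
  have hgbin : ∏ i ∈ range (2 * m * (p + 1)), gbin q (x (i + 1)) (x i)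
      = (∏ i ∈ range (2 * m * p), gbin q (x (i + 1)) (x i)) *
        ∏ i ∈ Ico (2 * m * p + m - (m - 1) - 1) (2 * m * p + m + (m - 1) + 1),
          gbin q (x (i + 1)) (x i) := by
    rw [mul_add, mul_one, show 2 * m * p + m - (m - 1) - 1 = 2 * m * p by omega,
      show 2 * m * p + m + (m - 1) + 1 = 2 * m * p + 2 * m by omega,
      prod_range_mul_prod_Ico _ (by omega)]
  rw [towerWt, towerWt, blockWt, towerExp_block_succ, zpow_add₀ hq, hsgn, hgbin]
  ring

theorem towerWt_congr {q : ℂ} {m p : ℕ} {e e' : ℕ → ℤ} (h : ∀ k ∈ Icc 1 (m - 1), e k = e' k)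
    (x : ℕ → ℕ) : towerWt q m p e x = towerWt q m p e' x := by
  rw [towerWt, towerWt, towerExp, towerExp, sum_congr rfl fun k hk => by rw [h k hk]]

theorem sumOver_towerWt_succ {q : ℂ} (hq : q ≠ 0) {m : ℕ} (hm : 0 < m) (p : ℕ) (e : ℕ → ℤ)
    (N : ℕ) (x : ℕ → ℕ) :
    sumOver N (range (2 * m * p)) (towerWt q m (p + 1) e) x
      = sgnTri q (x (2 * m * p)) * blockWt q e (2 * m * p + m) (m - 1) x *
        sumOver N (range (2 * m * p))
          (towerWt q m p fun k => e k + skew (2 * m * p + m) k x) x := by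
  rw [← sumOver_mul_left]
  refine sumOver_congr fun z hz _ => ?_
  have hz' : ∀ i, 2 * m * p ≤ i → z i = x i := fun i hi =>
    hz i (by rwa [mem_range, not_lt])
  rw [towerWt_succ hq hm, hz' _ le_rfl,
    blockWt_congr q e fun i hi => hz' i ((by omega : _ ≤ _).trans hi)]
  refine congrArg _ (towerWt_congr (fun k hk => ?_) z)
  have := mem_Icc.mp hk
  simp only [skew]
  rw [hz' _ (by omega), hz' _ (by omega), hz' _ (by omega), hz' _ (by omega)]

theorem sgnTri_mul_qPoch_mul_centerWt {q : ℂ} (hq : q ≠ 0) (n t : ℕ) :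
    sgnTri q t * qPoch q q t * centerWt q n t t
      = qPoch q q n * (q ^ (t ^ 2 + t) * gbin q n t) := by
  rcases Nat.lt_or_ge n t with h | h
  · rw [centerWt_eq_zero_of_lt q t h, gbin_eq_zero_of_lt q h]
    ring
  · obtain ⟨r, rfl⟩ := Nat.exists_eq_add_of_le h
    have hsq : sgnTri q t * sgnTri q t = q ^ (t ^ 2 + t) := by
      rw [sgnTri_mul_self hq, ← zpow_natCast]
      push_cast
      rfl
    rw [centerWt, sub_self, zero_mul, zpow_zero, mul_one, Nat.add_sub_cancel_left, qPoch_add,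
      ← pow_succ', ← hsq]
    ring

/-- The kernel `q^{s^2 + s} [n; s]` of the chain sums that summing over the centres of the blocks
produces. -/
def quadKernel (q : ℂ) (_ n s : ℕ) : ℂ := q ^ (s ^ 2 + s) * gbin q n s

theorem quadKernel_eq_zero_of_lt (q : ℂ) (j : ℕ) {n s : ℕ} (h : n < s) :
    quadKernel q j n s = 0 := by
  rw [quadKernel, gbin_eq_zero_of_lt q h, mul_zero]

/-- The sum `∑ ∏_{1 ≤ j < p} q^{s_j^2 + s_j} [s_{j+1}; s_j]` over all chains
`s_1 ≤ ⋯ ≤ s_p = n`, encoded with an additional lowest index `s_0 = 0`. -/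
def quadChainSum (q : ℂ) (p n : ℕ) : ℂ :=
  chainSum (quadKernel q) (fun s => if s = 0 then 1 else 0) p n

theorem chainSum_linKernel_zero_right (q : ℂ) (e : ℕ → ℤ) (k : ℕ) :
    chainSum (linKernel q e) 1 k 0 = 1 := by
  induction k with
  | zero => rfl
  | succ k ih => simp [chainSum, ih, linKernel, gbin_zero_right]

theorem sumOver_range_block_succ {R : Type*} [AddCommMonoid R] {m : ℕ} (hm : 0 < m) (p N : ℕ)
    (F : (ℕ → ℕ) → R) (x : ℕ → ℕ) :
    sumOver N (range (2 * m * (p + 1))) F x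
      = ∑ t ∈ range N,
        sumOver N (Icc (2 * m * p + m - (m - 1)) (2 * m * p + m + (m - 1)))
          (sumOver N (range (2 * m * p)) F) (Function.update x (2 * m * p) t) := by
  have hrange : range (2 * m * (p + 1)) = insert (2 * m * p)
      (Icc (2 * m * p + m - (m - 1)) (2 * m * p + m + (m - 1)) ∪ range (2 * m * p)) := by
    ext i
    rw [mul_add]
    simp only [mem_range, mem_insert, mem_union, mem_Icc]
    omega
  have hdisj : Disjoint (Icc (2 * m * p + m - (m - 1)) (2 * m * p + m + (m - 1)))
      (range (2 * m * p)) := by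
    simp only [disjoint_left, mem_Icc, mem_range]
    omega
  rw [hrange, sumOver_insert N (by simp only [mem_union, mem_Icc, mem_range]; omega)]
  exact sum_congr rfl fun t _ => sumOver_union N hdisj F _

theorem sum_towerWt {q : ℂ} (hq : q ≠ 0) {m : ℕ} (hm : 0 < m) {N : ℕ} (p : ℕ) (e : ℕ → ℤ)
    {x : ℕ → ℕ} (hx : x (2 * m * p) < N) :
    sumOver N (range (2 * m * p)) (towerWt q m p e) x
      = qPoch q q (x (2 * m * p)) * quadChainSum q p (x (2 * m * p)) *
        chainSum (linKernel q e) 1 (m - 1) (x (2 * m * p)) := by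
  induction p generalizing e x with
  | zero =>
    simp only [mul_zero, range_zero, sumOver_empty, towerWt, towerExp, prod_empty, quadChainSum,
      chainSum]
    by_cases h : x 0 = 0
    · simp [h, layerSum, qPoch_zero, chainSum_linKernel_zero_right]
    · simp [h]
  | succ p ih =>
    have htop : 2 * m * p + m + (m - 1) + 1 = 2 * m * (p + 1) := by rw [mul_add]; omega
    have hbot : 2 * m * p + m - (m - 1) - 1 = 2 * m * p := by omega
    set n := x (2 * m * (p + 1))
    rw [sumOver_range_block_succ hm, quadChainSum,
      chainSum_succ_eq_sum_range _ (fun _ _ => quadKernel_eq_zero_of_lt q _) hx, mul_sum, sum_mul]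
    refine sum_congr rfl fun t ht => ?_
    set y := Function.update x (2 * m * p) t
    have hyt : y (2 * m * p) = t := Function.update_self ..
    have hyn : y (2 * m * (p + 1)) = n := Function.update_of_ne (by rw [mul_add]; omega) ..
    have hblock := sum_block hq e (x := y) (c := 2 * m * p + m) (k := m - 1) (by omega)
      (by rwa [htop, hyn]) t
    rw [htop, hbot, hyt, hyn, Nat.add_sub_cancel] at hblock
    calc
      _ = sgnTri q t * qPoch q q t * quadChainSum q p t *
          (centerWt q n t t * chainSum (linKernel q e) 1 (m - 1) n) := by
        rw [← hblock, ← sumOver_mul_left]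
        refine sumOver_congr fun z hz _ => ?_
        have hzt : z (2 * m * p) = t := by
          rw [hz _ (by simp only [mem_Icc]; omega), hyt]
        rw [sumOver_towerWt_succ hq hm, ih _ (by rw [hzt]; exact mem_range.mp ht), hzt, sub_self,
          zero_mul, zpow_zero]
        ring
      _ = _ := by
        rw [quadKernel, ← quadChainSum]
        linear_combination (quadChainSum q p t * chainSum (linKernel q e) 1 (m - 1) n) *
          sgnTri_mul_qPoch_mul_centerWt hq n t

/-! ### Multiple sums over monotone tuples -/

theorem sumOver_insert_of_ne {ι R : Type*} [DecidableEq ι] [AddCommMonoid R] {N : ℕ} {i : ι}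
    {s : Finset ι} (hi : i ∉ s) {F : (ι → ℕ) → R} {x : ι → ℕ} (hx : x i < N)
    (hF : ∀ z, z i ≠ x i → F z = 0) : sumOver N (insert i s) F x = sumOver N s F x := by
  rw [sumOver_insert N hi, sum_eq_single_of_mem (x i) (mem_range.mpr hx) fun c _ hc => ?_,
    Function.update_eq_self]
  refine sum_eq_zero fun y _ => hF _ ?_
  rwa [Function.updateFinset, dif_neg hi, Function.update_self]

theorem sumOver_Icc_mul {R : Type*} [NonUnitalNonAssocSemiring R] {P : ℕ} (hP : 0 < P) (N : ℕ)
    (φ : ℕ → R) (G : (ℕ → ℕ) → R) (x : ℕ → ℕ) :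
    sumOver N (Icc 1 P) (fun z => φ (z P) * G z) x
      = ∑ n ∈ range N, φ n * sumOver N (Icc 1 (P - 1)) G (Function.update x P n) := by
  obtain ⟨k, rfl⟩ : ∃ k, P = k + 1 := ⟨P - 1, by omega⟩
  have hnotMem : k + 1 ∉ Icc 1 k := by simp
  rw [Nat.add_sub_cancel, ← insert_Icc_right_eq_Icc_add_one (by omega),
    sumOver_insert N hnotMem]
  refine sum_congr rfl fun n _ => ?_
  rw [← sumOver_mul_left]
  exact sumOver_congr fun z hz _ => by rw [hz _ hnotMem, Function.update_self]

theorem sumOver_prod_eq_chainSum {R : Type*} [CommSemiring R] {g : ℕ → ℕ → ℕ → R}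
    (hg : ∀ j w d, w < d → g j w d = 0) {N : ℕ} (k : ℕ) {x : ℕ → ℕ} (hx : x (k + 1) < N) :
    sumOver N (Icc 1 k) (fun z => ∏ i ∈ Icc 1 k, g i (z (i + 1)) (z i)) x
      = chainSum g 1 k (x (k + 1)) := by
  induction k generalizing x with
  | zero => exact sumOver_empty N _ x
  | succ k ih =>
    have hnotMem : k + 1 ∉ Icc 1 k := by simp
    rw [← insert_Icc_right_eq_Icc_add_one (by omega), sumOver_insert N hnotMem,
      chainSum_succ_eq_sum_range 1 (hg _) hx]
    refine sum_congr rfl fun d hd => ?_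
    set y := Function.update x (k + 1) d
    have hy : y (k + 1) = d := Function.update_self ..
    have hy' : y (k + 1 + 1) = x (k + 1 + 1) := Function.update_of_ne (by omega) ..
    rw [← hy, ← ih (x := y) (by rw [hy]; exact mem_range.mp hd), ← sumOver_mul_left]
    refine sumOver_congr fun z hz _ => ?_
    rw [prod_insert hnotMem, hz (k + 1) hnotMem, hz (k + 1 + 1) (by simp),
      hy, hy']

theorem monotone_of_extTup_le {P N : ℕ} {f : Fin P → Fin N}
    (h : ∀ i ∈ Icc 1 (P - 1), extTup P N f i ≤ extTup P N f (i + 1)) : Monotone f := by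
  cases P with
  | zero => exact Subsingleton.monotone f
  | succ P =>
    refine Fin.monotone_iff_le_succ.mpr fun i => ?_
    have hi := h (i + 1) (mem_Icc.mpr (by omega))
    rw [extTup, extTup, dif_pos (by omega), dif_pos (by omega)] at hi
    exact hi

theorem sum_monotone_extTup {R : Type*} [AddCommMonoid R] (P N : ℕ) {F : (ℕ → ℕ) → R}
    (hF : ∀ x, ∀ i ∈ Icc 1 (P - 1), x (i + 1) < x i → F x = 0) :
    ∑ f : Fin P → Fin N with ∀ i j, i ≤ j → f i ≤ f j, F (extTup P N f)
      = sumOver N (Icc 1 P) F 0 := by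
  rw [← sum_extTup]
  refine sum_filter_of_ne fun f _ hf => monotone_of_extTup_le fun i hi => ?_
  by_contra! hlt
  exact hf (hF _ i hi hlt)

theorem sum_monotone_extTup_prod {R : Type*} [CommSemiring R] {g : ℕ → ℕ → ℕ → R}
    (hg : ∀ j w d, w < d → g j w d = 0) {M : ℕ} (hM : 0 < M) (N : ℕ) (φ : ℕ → R) :
    ∑ f : Fin M → Fin N with ∀ i j, i ≤ j → f i ≤ f j, φ (extTup M N f M) *
        ∏ i ∈ Icc 1 (M - 1), g i (extTup M N f (i + 1)) (extTup M N f i)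
      = ∑ n ∈ range N, φ n * chainSum g 1 (M - 1) n := by
  rw [sum_monotone_extTup M N
    (F := fun x => φ (x M) * ∏ i ∈ Icc 1 (M - 1), g i (x (i + 1)) (x i)), sumOver_Icc_mul hM]
  · refine sum_congr rfl fun n hn => ?_
    have hlast : Function.update (0 : ℕ → ℕ) M n (M - 1 + 1) = n := by
      rw [Nat.sub_add_cancel hM, Function.update_self]
    rw [sumOver_prod_eq_chainSum hg _ (hlast.trans_lt (mem_range.mp hn)), hlast]
  · intro x i hi hlt
    have hgi : g i (x (i + 1)) (x i) = 0 := hg i _ _ hlt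
    rw [prod_eq_zero hi hgi, mul_zero]

theorem sum_monotone_extTup_prod_of_last_eq {R : Type*} [CommSemiring R] {g : ℕ → ℕ → ℕ → R}
    (hg : ∀ j w d, w < d → g j w d = 0) {M N c : ℕ} (hM : 0 < M) (hc : c < N) :
    ∑ f : Fin M → Fin N with (∀ i j, i ≤ j → f i ≤ f j) ∧ extTup M N f M = c,
        ∏ i ∈ Icc 1 (M - 1), g i (extTup M N f (i + 1)) (extTup M N f i)
      = chainSum g 1 (M - 1) c := by
  have h := sum_monotone_extTup_prod hg hM N fun n => if n = c then 1 else 0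
  simp only [ite_mul, one_mul, zero_mul, sum_ite_eq', mem_range, if_pos hc] at h
  rw [← filter_filter, sum_filter, h]

/-! ### The two sides of the duality -/

/-- The sum `𝓕_{m,p}(q)`, truncated at `N - 1`. -/
def calF (m p N : ℕ) (q : ℂ) : ℂ :=
  ∑ f : Fin (2 * m * p) → Fin N with ∀ i j, i ≤ j → f i ≤ f j,
    let n := extTup (2 * m * p) N f
    qPoch q q (n (2 * m * p)) * (-1) ^ n (2 * m * p) * q ^ (-tri (n (2 * m * p))) *
      (∏ i ∈ Icc 1 (2 * m * p) with ¬ m ∣ i, ∏ j ∈ Icc (i + 1) (2 * m * p),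
        q ^ (deltaLO m i j * n i * n j)) *
      (∏ i ∈ Icc 1 (2 * p - 1), sgnTri q (n (m * i))) *
      ∏ i ∈ Icc 1 (2 * m * p - 1), q ^ (betLO m i * n i) * gbin q (n (i + 1)) (n i)

/-- The sum `𝓤_{m,p}(-1; q)`, truncated at `N - 1`. -/
def calU (m p N : ℕ) (q : ℂ) : ℂ :=
  ∑ a : Fin m → Fin N with ∀ i j, i ≤ j → a i ≤ a j,
    ∑ b : Fin p → Fin N with (∀ i j, i ≤ j → b i ≤ b j) ∧ extTup p N b p = extTup m N a m,
      let n := extTup m N a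
      let s := extTup p N b
      qPoch q q (n m) ^ 2 * (-1) ^ n m * q ^ (-tri (n m)) *
        (∏ i ∈ Icc 1 (m - 1), q ^ (n i ^ 2 + n i) * gbin q (n (i + 1)) (n i)) *
        ∏ j ∈ Icc 1 (p - 1), q ^ (-(s j : ℤ) - s (j + 1) * s j) * gbin q (s (j + 1)) (s j)

theorem quadChainSum_succ (q : ℂ) (k n : ℕ) :
    quadChainSum q (k + 1) n = chainSum (quadKernel q) 1 k n := by
  induction k generalizing n with
  | zero => simp [quadChainSum, chainSum, quadKernel, gbin_zero_right]
  | succ k ih =>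
    rw [quadChainSum, chainSum, chainSum]
    exact sum_congr rfl fun d _ => congrArg _ (ih d)

theorem inv_zpow_mul_gbin_inv {q : ℂ} (hq : q ≠ 0) (n s : ℕ) :
    q⁻¹ ^ (-(s : ℤ) - n * s) * gbin q⁻¹ n s = q ^ (s ^ 2 + s) * gbin q n s := by
  rcases Nat.lt_or_ge n s with h | h
  · rw [gbin_eq_zero_of_lt _ h, gbin_eq_zero_of_lt _ h, mul_zero, mul_zero]
  · obtain ⟨b, rfl⟩ := Nat.exists_eq_add_of_le h
    rw [← gbin_inv hq, ← mul_assoc, ← pow_add, inv_zpow', ← zpow_natCast]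
    congr 2
    push_cast
    ring

theorem quadKernel_inv {q : ℂ} (hq : q ≠ 0) : quadKernel q⁻¹ = linKernel q fun _ => -1 := by
  funext j n s
  rw [quadKernel, ← inv_zpow_mul_gbin_inv (inv_ne_zero hq), inv_inv, linKernel, neg_one_mul,
    mul_comm (s : ℤ)]

theorem sum_towerWt_Icc {q : ℂ} (hq : q ≠ 0) {m p N : ℕ} (hm : 0 < m) (hp : 0 < p) (e : ℕ → ℤ)
    {x : ℕ → ℕ} (hx0 : x 0 = 0) (hx : x (2 * m * p) < N) :
    sumOver N (Icc 1 (2 * m * p - 1)) (towerWt q m p e) x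
      = qPoch q q (x (2 * m * p)) * quadChainSum q p (x (2 * m * p)) *
        chainSum (linKernel q e) 1 (m - 1) (x (2 * m * p)) := by
  have hP : 0 < 2 * m * p := by positivity
  have hrange : range (2 * m * p) = insert 0 (Icc 1 (2 * m * p - 1)) := by
    ext i
    simp only [mem_range, mem_insert, mem_Icc]
    omega
  rw [← sum_towerWt hq hm p e hx, hrange, sumOver_insert_of_ne (by simp) (by omega)]
  intro z hz
  rw [towerWt, if_neg (by omega), zero_mul, zero_mul, zero_mul]

theorem calF_eq_sum {q : ℂ} (hq : q ≠ 0) {m p : ℕ} (hm : 0 < m) (hp : 0 < p) (N : ℕ) :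
    calF m p N q = ∑ n ∈ range N, qPoch q⁻¹ q⁻¹ n *
      (qPoch q q n * quadChainSum q p n * chainSum (linKernel q fun _ => -1) 1 (m - 1) n) := by
  have hP : 0 < 2 * m * p := by positivity
  calc
    _ = sumOver N (Icc 1 (2 * m * p)) (fun x =>
        qPoch q⁻¹ q⁻¹ (x (2 * m * p)) * towerWt q m p (fun _ => -1) x) 0 := by
      rw [← sum_monotone_extTup]
      · refine sum_congr rfl fun f _ => ?_
        rw [towerWt_neg_one hq hm hp (by simp [extTup]), qPoch_inv hq]
        ring
      · intro x i hi hlt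
        have hiP : i ∈ range (2 * m * p) := by
          rw [mem_Icc] at hi
          rw [mem_range]
          omega
        have hgbin : gbin q (x (i + 1)) (x i) = 0 := gbin_eq_zero_of_lt q hlt
        rw [towerWt, prod_eq_zero hiP hgbin, mul_zero, mul_zero]
    _ = _ := by
      rw [sumOver_Icc_mul hP]
      refine sum_congr rfl fun n hn => ?_
      have hlast : Function.update (0 : ℕ → ℕ) (2 * m * p) n (2 * m * p) = n :=
        Function.update_self ..
      rw [sum_towerWt_Icc hq hm hp _ (Function.update_of_ne hP.ne ..)
        (hlast.trans_lt (mem_range.mp hn)), hlast]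

theorem calU_inv_eq_sum {q : ℂ} (hq : q ≠ 0) {m p : ℕ} (hm : 0 < m) (hp : 0 < p) (N : ℕ) :
    calU m p N q⁻¹ = ∑ n ∈ range N, qPoch q⁻¹ q⁻¹ n *
      (qPoch q q n * quadChainSum q p n * chainSum (linKernel q fun _ => -1) 1 (m - 1) n) := by
  have hpref : ∀ n : ℕ, qPoch q⁻¹ q⁻¹ n ^ 2 * (-1) ^ n * q⁻¹ ^ (-tri n)
      = qPoch q⁻¹ q⁻¹ n * qPoch q q n := fun n => by
    have h := qPoch_inv (inv_ne_zero hq) n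
    rw [inv_inv] at h
    rw [h]
    ring
  have hzero : ∀ (q : ℂ) (j w d : ℕ), w < d → quadKernel q j w d = 0 :=
    fun q j _ _ => quadKernel_eq_zero_of_lt q j
  have hinner : ∀ a : Fin m → Fin N,
      ∑ b : Fin p → Fin N with
          (∀ i j, i ≤ j → b i ≤ b j) ∧ extTup p N b p = extTup m N a m,
        ∏ j ∈ Icc 1 (p - 1), quadKernel q j (extTup p N b (j + 1)) (extTup p N b j)
      = quadChainSum q p (extTup m N a m) := fun a => by
    obtain ⟨k, rfl⟩ := Nat.exists_eq_add_of_le' hp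
    have ham : extTup m N a m < N := by
      rw [extTup, dif_pos ⟨hm, le_rfl⟩]
      exact Fin.is_lt _
    rw [sum_monotone_extTup_prod_of_last_eq (hzero q) hp ham, quadChainSum_succ,
      Nat.add_sub_cancel]
  simp only [← mul_assoc]
  rw [← quadKernel_inv hq, ← sum_monotone_extTup_prod (hzero q⁻¹) hm]
  refine sum_congr rfl fun a _ => ?_
  rw [← hinner, mul_sum, sum_mul]
  refine sum_congr rfl fun b _ => ?_
  simp only [hpref, inv_zpow_mul_gbin_inv hq, quadKernel]
  ring

theorem calF_calU_duality_general {m p : ℕ} (hm : 0 < m) (hp : 0 < p) (N : ℕ) {q : ℂ}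
    (hq : q ≠ 0) : calF m p N q = calU m p N q⁻¹ :=
  (calF_eq_sum hq hm hp N).trans (calU_inv_eq_sum hq hm hp N).symm

/-- Corollary 1.4 (Lovejoy–Osburn): duality at roots of unity,
`𝓕_(m,p)(ζ) = 𝓤_(m,p)(-1; ζ⁻¹)`. -/
theorem calF_calU_duality
    (m p N : ℕ) (hm : 0 < m) (hp : 0 < p) (hN : 0 < N)
    (ζ : ℂ) (hζ : ζ ^ N = 1) :
    (∑ f ∈ Finset.univ.filter
        (fun f : Fin (2 * m * p) → Fin N => ∀ i j, i ≤ j → f i ≤ f j),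
      let n := extTup (2 * m * p) N f
      qPoch ζ ζ (n (2 * m * p)) * (-1 : ℂ) ^ (n (2 * m * p)) *
        ζ ^ (-(((n (2 * m * p) : ℤ) * ((n (2 * m * p) : ℤ) + 1)) / 2)) *
        (∏ i ∈ (Icc 1 (2 * m * p)).filter (fun i => ¬ m ∣ i),
          ∏ j ∈ Icc (i + 1) (2 * m * p),
            ζ ^ (deltaLO m i j * (n i : ℤ) * (n j : ℤ))) *
        (∏ i ∈ Icc 1 (2 * p - 1),
          (-1 : ℂ) ^ (n (m * i)) *
            ζ ^ (((n (m * i) : ℤ) * ((n (m * i) : ℤ) + 1)) / 2)) *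
        (∏ i ∈ Icc 1 (2 * m * p - 1),
          ζ ^ (betLO m i * (n i : ℤ)) * gbin ζ (n (i + 1)) (n i)))
    = ∑ a ∈ Finset.univ.filter
          (fun a : Fin m → Fin N => ∀ i j, i ≤ j → a i ≤ a j),
        ∑ b ∈ Finset.univ.filter
            (fun b : Fin p → Fin N =>
              (∀ i j, i ≤ j → b i ≤ b j) ∧ extTup p N b p = extTup m N a m),
          (let na := extTup m N a
          let sb := extTup p N b
          (qPoch ζ⁻¹ ζ⁻¹ (na m)) ^ 2 * (-1 : ℂ) ^ (na m) *
            ζ⁻¹ ^ (-(((na m : ℤ) * ((na m : ℤ) + 1)) / 2)) *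
            (∏ i ∈ Icc 1 (m - 1),
              ζ⁻¹ ^ ((na i) ^ 2 + na i) * gbin ζ⁻¹ (na (i + 1)) (na i)) *
            (∏ j ∈ Icc 1 (p - 1),
              ζ⁻¹ ^ (-(sb j : ℤ) - (sb (j + 1) : ℤ) * (sb j : ℤ)) *
                gbin ζ⁻¹ (sb (j + 1)) (sb j))) := by
  have hζ0 : ζ ≠ 0 := by
    rintro rfl
    rw [zero_pow hN.ne'] at hζ
    exact zero_ne_one hζ
  exact calF_calU_duality_general hm hp N hζ0

end
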